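/- arXiv:1810.06864 — 3 statements merged into one kernel-verified Lean document; each statement's English description precedes it below -/
import Mathlib

section
/- For every finite graph G and every positive integer k, there exists a rooted compact tree decomposition (T,β) of G such that every adhesion of (T,β) has at most k vertices and, for every node t of T and every integer i with 1 ≤ i ≤ k, the bag β(t) is (i,i)-unbreakable in G. -/
/-- A separation of a graph `G`: a pair `(A,B)` of vertex sets covering `V(G)` such that
no edge of `G` has one endpoint in `A \ B` and the other in `B \ A`. -/
def IsSeparation {V : Type} (G : SimpleGraph V) (A B : Set V) : Prop :=
  A ∪ B = Set.univ ∧ ∀ u v : V, G.Adj u v → u ∈ A \ B → v ∉ B \ A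

/-- `S` is `(q,k)`-unbreakable in `G`: every separation of order at most `k`
has at most `q` vertices of `S` on one of its sides. -/
def IsUnbreakable {V : Type} (G : SimpleGraph V) (S : Set V) (q k : ℕ) : Prop :=
  ∀ A B : Set V, IsSeparation G A B → (A ∩ B).ncard ≤ k →
    (A ∩ S).ncard ≤ q ∨ (B ∩ S).ncard ≤ q

/-- `s` is an ancestor of `t` (possibly `s = t`) with respect to the parent map. -/
def IsAncestor {ι : Type} (parent : ι → ι) (s t : ι) : Prop :=
  ∃ n : ℕ, parent^[n] t = s

/-- `s` lies on the (unique) path between `t₁` and `t₂` in the rooted tree given by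
`parent`: `s` is an ancestor of `t₁` or of `t₂`, and every common ancestor of
`t₁` and `t₂` is an ancestor of `s`. -/
def OnTreePath {ι : Type} (parent : ι → ι) (s t₁ t₂ : ι) : Prop :=
  (IsAncestor parent s t₁ ∨ IsAncestor parent s t₂) ∧
    ∀ u : ι, IsAncestor parent u t₁ → IsAncestor parent u t₂ → IsAncestor parent u s

/-- A rooted tree decomposition of `G`, given by a rooted tree on node type `ι`
(encoded by a root and a parent map under which every node reaches the root)
together with bags `β`: bags cover all vertices and all edges, and for every
vertex `v` the set of nodes whose bag contains `v` is connected in the tree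
(i.e. closed under taking nodes on paths between two such nodes). -/
structure IsRootedTreeDecomp {V ι : Type} (G : SimpleGraph V) (root : ι)
    (parent : ι → ι) (β : ι → Set V) : Prop where
  parent_root : parent root = root
  reaches_root : ∀ t : ι, ∃ n : ℕ, parent^[n] t = root
  exists_bag : ∀ v : V, ∃ t : ι, v ∈ β t
  adj_bag : ∀ u v : V, G.Adj u v → ∃ t : ι, u ∈ β t ∧ v ∈ β t
  bag_connected : ∀ (v : V) (t₁ t₂ s : ι), v ∈ β t₁ → v ∈ β t₂ →
    OnTreePath parent s t₁ t₂ → v ∈ β s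

/-- The (open) neighborhood of a vertex set `X` in `G`. -/
def nbhd {V : Type} (G : SimpleGraph V) (X : Set V) : Set V :=
  {v | v ∉ X ∧ ∃ u ∈ X, G.Adj u v}

/-- `γ(t)`: union of the bags of `t` and all its descendants. -/
def gammaSet {V ι : Type} (parent : ι → ι) (β : ι → Set V) (t : ι) : Set V :=
  {v | ∃ s : ι, IsAncestor parent t s ∧ v ∈ β s}

/-- `α(t) = γ(t) \ σ(t)`, where for a non-root node `t` the adhesion is
`σ(t) = β(t) ∩ β(parent t)`. -/
def alphaSet {V ι : Type} (parent : ι → ι) (β : ι → Set V) (t : ι) : Set V :=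
  gammaSet parent β t \ (β t ∩ β (parent t))

/-- Compactness of a rooted tree decomposition: for every non-root node `t`,
`G[α(t)]` is connected and `N_G(α(t)) = σ(t)`. -/
def IsCompactRTD {V ι : Type} (G : SimpleGraph V) (root : ι) (parent : ι → ι)
    (β : ι → Set V) : Prop :=
  ∀ t : ι, t ≠ root → (G.induce (alphaSet parent β t)).Connected ∧
    nbhd G (alphaSet parent β t) = β t ∩ β (parent t)


section TDProof

structure RTD {V ι : Type} (G : SimpleGraph V) (k : ℕ) (root : ι) (parent : ι → ι)
    (β : ι → Set V) (τ : V → ι) : Prop where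
  parent_root : parent root = root
  reaches : ∀ t : ι, ∃ n : ℕ, parent^[n] t = root
  mem_top : ∀ v, v ∈ β (τ v)
  up : ∀ v s, v ∈ β s → s ≠ τ v → s ≠ root ∧ v ∈ β (parent s)
  adj : ∀ u v : V, G.Adj u v → ∃ t : ι, u ∈ β t ∧ v ∈ β t
  adh : ∀ s, s ≠ root → (β s ∩ β (parent s)).ncard ≤ k

theorem anc_refl {ι : Type} (p : ι → ι) (s : ι) : IsAncestor p s s := ⟨0, rfl⟩

theorem anc_trans {ι : Type} {p : ι → ι} {a b c : ι} (h1 : IsAncestor p a b)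
    (h2 : IsAncestor p b c) : IsAncestor p a c := by
  obtain ⟨n, rfl⟩ := h1
  obtain ⟨m, rfl⟩ := h2
  exact ⟨n + m, Function.iterate_add_apply _ _ _ _⟩

theorem anc_parent_self {ι : Type} (p : ι → ι) (s : ι) : IsAncestor p (p s) s := ⟨1, rfl⟩

theorem anc_parent {ι : Type} {p : ι → ι} {s t : ι} (h : IsAncestor p s t) :
    IsAncestor p (p s) t := anc_trans (anc_parent_self p s) h

theorem anc_step {ι : Type} {p : ι → ι} {s t : ι} (h : IsAncestor p s t) (hne : t ≠ s) :
    IsAncestor p s (p t) := by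
  obtain ⟨n, hn⟩ := h
  cases n with
  | zero => exact absurd hn hne
  | succ n => exact ⟨n, by rwa [Function.iterate_succ_apply] at hn⟩

theorem anc_comparable {ι : Type} {p : ι → ι} {a b q : ι} (h1 : IsAncestor p a q)
    (h2 : IsAncestor p b q) : IsAncestor p a b ∨ IsAncestor p b a := by
  obtain ⟨n, rfl⟩ := h1
  obtain ⟨m, rfl⟩ := h2
  rcases le_total n m with h | h
  · right
    exact ⟨m - n, by rw [← Function.iterate_add_apply, Nat.sub_add_cancel h]⟩
  · left
    exact ⟨n - m, by rw [← Function.iterate_add_apply, Nat.sub_add_cancel h]⟩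

namespace RTD

variable {V ι : Type} {G : SimpleGraph V} {k : ℕ} {root : ι} {parent : ι → ι}
    {β : ι → Set V} {τ : V → ι}

theorem iter_root (h : RTD G k root parent β τ) (n : ℕ) : parent^[n] root = root :=
  Function.iterate_fixed h.parent_root n

theorem anc_root (h : RTD G k root parent β τ) {s : ι} (hs : IsAncestor parent s root) :
    s = root := by
  obtain ⟨n, rfl⟩ := hs
  exact h.iter_root n

open Classical in
noncomputable def depth (h : RTD G k root parent β τ) (s : ι) : ℕ := Nat.find (h.reaches s)

theorem depth_parent (h : RTD G k root parent β τ) {s : ι} (hs : s ≠ root) :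
    h.depth (parent s) + 1 ≤ h.depth s := by
  classical
  have h1 : parent^[h.depth s] s = root := Nat.find_spec (h.reaches s)
  cases hd : h.depth s with
  | zero => rw [hd] at h1; exact absurd h1 hs
  | succ n =>
    rw [hd, Function.iterate_succ_apply] at h1
    have : h.depth (parent s) ≤ n := Nat.find_min' (h.reaches (parent s)) h1
    omega

theorem depth_iter (h : RTD G k root parent β τ) (n : ℕ) (t : ι) (hne : parent^[n] t ≠ t) :
    h.depth (parent^[n] t) < h.depth t := by
  induction n generalizing t with
  | zero => exact absurd rfl hne
  | succ n ih =>
    rw [Function.iterate_succ_apply] at hne ⊢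
    have ht : t ≠ root := by
      rintro rfl
      rw [h.parent_root, h.iter_root] at hne
      exact hne rfl
    have := h.depth_parent ht
    by_cases h2 : parent^[n] (parent t) = parent t
    · rw [h2]; omega
    · have := ih _ h2
      omega

theorem depth_lt (h : RTD G k root parent β τ) {s t : ι} (hs : IsAncestor parent s t)
    (hne : s ≠ t) : h.depth s < h.depth t := by
  obtain ⟨n, rfl⟩ := hs
  exact h.depth_iter n t hne

theorem depth_le (h : RTD G k root parent β τ) {s t : ι} (hs : IsAncestor parent s t) :
    h.depth s ≤ h.depth t := by
  by_cases e : s = t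
  · rw [e]
  · exact (h.depth_lt hs e).le

theorem anc_antisymm (h : RTD G k root parent β τ) {s t : ι} (hs : IsAncestor parent s t)
    (ht : IsAncestor parent t s) : s = t := by
  by_contra e
  have := h.depth_lt hs e
  have := h.depth_le ht
  omega

theorem top_anc (h : RTD G k root parent β τ) {v : V} {q : ι} (hv : v ∈ β q) :
    IsAncestor parent (τ v) q := by
  obtain ⟨n, hn⟩ := h.reaches q
  induction n generalizing q with
  | zero =>
    by_cases e : q = τ v
    · rw [e]; exact anc_refl _ _
    · exact absurd hn (h.up v q hv e).1
  | succ n ih =>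
    by_cases e : q = τ v
    · rw [e]; exact anc_refl _ _
    · exact anc_trans (ih (h.up v q hv e).2 hn) (anc_parent_self _ _)

theorem walk (h : RTD G k root parent β τ) {v : V} {q s : ι} (hv : v ∈ β q)
    (hs : IsAncestor parent s q) : IsAncestor parent s (τ v) ∨ v ∈ β s := by
  obtain ⟨n, hn⟩ := hs
  induction n generalizing q with
  | zero => right; rw [← hn]; exact hv
  | succ n ih =>
    by_cases e : q = τ v
    · left; exact ⟨n + 1, by rw [← e]; exact hn⟩
    · exact ih (h.up v q hv e).2 hn

theorem between (h : RTD G k root parent β τ) {v : V} {q s : ι} (hv : v ∈ β q)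
    (hs : IsAncestor parent s q) (ha : IsAncestor parent (τ v) s) : v ∈ β s := by
  rcases h.walk hv hs with h1 | h1
  · rw [h.anc_antisymm h1 ha]; exact h.mem_top v
  · exact h1

theorem walk2 (h : RTD G k root parent β τ) {v : V} {q s : ι} (hv : v ∈ β q)
    (hs : IsAncestor parent s q) (hn : ¬ IsAncestor parent s (τ v)) :
    v ∈ β s ∧ s ≠ root ∧ v ∈ β (parent s) := by
  have h1 := (h.walk hv hs).resolve_left hn
  refine ⟨h1, h.up v s h1 ?_⟩
  rintro rfl
  exact hn (anc_refl _ _)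

theorem not_anc_of_mem_parent (h : RTD G k root parent β τ) {v : V} {s : ι} (hs : s ≠ root)
    (hv : v ∈ β (parent s)) : ¬ IsAncestor parent s (τ v) := by
  intro h1
  have := h.depth_le (anc_trans h1 (h.top_anc hv))
  have := h.depth_parent hs
  omega

/-- edges leaving `α(s)` -/
theorem edge_out (h : RTD G k root parent β τ) {u v : V} {s : ι}
    (hu : IsAncestor parent s (τ u)) (huv : G.Adj u v) (hv : ¬ IsAncestor parent s (τ v)) :
    v ∈ β s ∧ s ≠ root ∧ v ∈ β (parent s) := by
  obtain ⟨q, hq1, hq2⟩ := h.adj u v huv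
  exact h.walk2 hq2 (anc_trans hu (h.top_anc hq1)) hv

/-- conversion to the target notion -/
theorem toDecomp (h : RTD G k root parent β τ) : IsRootedTreeDecomp G root parent β where
  parent_root := h.parent_root
  reaches_root := h.reaches
  exists_bag v := ⟨τ v, h.mem_top v⟩
  adj_bag := h.adj
  bag_connected := by
    intro v t1 t2 s h1 h2 ⟨hs, hu⟩
    have ha := hu (τ v) (h.top_anc h1) (h.top_anc h2)
    rcases hs with hs | hs
    · exact h.between h1 hs ha
    · exact h.between h2 hs ha

theorem reroot_step (h : RTD G k root parent β τ) (c : ι) (hc : parent c = root) (hcr : c ≠ root) :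
    ∃ (p' : ι → ι) (τ' : V → ι), RTD G k c p' β τ' ∧
      ∀ a, parent a ≠ a → p' a = parent a ∨ p' (parent a) = a := by
  classical
  let p' : ι → ι := fun a => if a = c ∨ a = root then c else parent a
  have pc : p' c = c := by simp [p']
  have pr : p' root = c := by simp [p']
  have po : ∀ a, a ≠ c → a ≠ root → p' a = parent a := by
    intro a h1 h2; simp [p', h1, h2]
  refine ⟨p', fun v => if v ∈ β c then c else τ v, ⟨pc, ?_, ?_, ?_, h.adj, ?_⟩, ?_⟩
  · intro t
    obtain ⟨n, hn⟩ := h.reaches t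
    induction n generalizing t with
    | zero => exact ⟨1, by rw [show t = root from hn]; exact pr⟩
    | succ n ih =>
      by_cases e1 : t = c
      · exact ⟨0, e1⟩
      by_cases e2 : t = root
      · exact ⟨1, by rw [e2]; exact pr⟩
      obtain ⟨m, hm⟩ := ih (parent t) hn
      exact ⟨m + 1, by rw [Function.iterate_succ_apply, po t e1 e2]; exact hm⟩
  · intro v
    by_cases hv : v ∈ β c
    · simp [hv]
    · simp only [hv, if_false]; exact h.mem_top v
  · intro v s hs hne
    by_cases hv : v ∈ β c
    · simp only [hv, if_true] at hne
      refine ⟨hne, ?_⟩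
      by_cases e2 : s = root
      · rw [e2, pr]; exact hv
      · rw [po s hne e2]
        by_cases e3 : s = τ v
        · exfalso
          have h1 := h.top_anc hv
          rw [← e3] at h1
          have h2 := anc_step h1 (Ne.symm hne)
          rw [hc] at h2
          exact e2 (h.anc_root h2)
        · exact (h.up v s hs e3).2
    · simp only [hv, if_false] at hne
      have hsc : s ≠ c := by rintro rfl; exact hv hs
      have := h.up v s hs hne
      exact ⟨hsc, by rw [po s hsc this.1]; exact this.2⟩
  · intro s hs
    by_cases e2 : s = root
    · rw [e2, pr, ← hc, Set.inter_comm]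
      exact h.adh c hcr
    · rw [po s hs e2]; exact h.adh s e2
  · intro a ha
    by_cases e1 : a = c
    · right; rw [e1, hc, pr]
    by_cases e2 : a = root
    · rw [e2] at ha; exact absurd h.parent_root ha
    left; exact po a e1 e2

theorem reroot (h : RTD G k root parent β τ) (t : ι) :
    ∃ (p' : ι → ι) (τ' : V → ι), RTD G k t p' β τ' := by
  suffices H : ∀ n t, parent^[n] t = root → ∃ (p' : ι → ι) (τ' : V → ι), RTD G k t p' β τ' ∧
      ∀ a, parent a ≠ a → p' a = parent a ∨ p' (parent a) = a by
    obtain ⟨n, hn⟩ := h.reaches t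
    obtain ⟨p', τ', h1, -⟩ := H n t hn
    exact ⟨p', τ', h1⟩
  intro n
  induction n with
  | zero =>
    intro t ht
    have : t = root := ht
    subst this
    exact ⟨parent, τ, h, fun a _ => Or.inl rfl⟩
  | succ n ih =>
    intro t ht
    obtain ⟨p1, τ1, h1, h2⟩ := ih (parent t) ht
    by_cases e : parent t = t
    · rw [e] at h1; exact ⟨p1, τ1, h1, h2⟩
    have h3 : p1 t = parent t := by
      rcases h2 t e with h3 | h3
      · exact h3
      · rw [h1.parent_root] at h3; exact absurd h3 e
    obtain ⟨p2, τ2, h4, h5⟩ := h1.reroot_step t h3 (Ne.symm e)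
    refine ⟨p2, τ2, h4, ?_⟩
    intro a ha
    rcases h2 a ha with h6 | h6
    · have := h5 a (by rw [h6]; exact ha)
      rwa [h6] at this
    · have := h5 (parent a) (by rw [h6]; exact Ne.symm ha)
      rw [h6] at this
      exact this.symm

end RTD

section Surgery

noncomputable def phiSum {V : Type} [Fintype V] (d : V → ℕ) (X : Set V) : ℕ :=
  ∑ x ∈ (Set.toFinite X).toFinset, d x

theorem phiSum_exch {V : Type} [Fintype V] (d : V → ℕ) (X F Z : Set V) (m : ℕ)
    (hd : Disjoint (X \ F) Z) (hc : Z.ncard = (X ∩ F).ncard) (hne : (X ∩ F).Nonempty)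
    (hZ : ∀ z ∈ Z, d z ≤ m) (hX : ∀ x ∈ X ∩ F, m < d x) :
    phiSum d ((X \ F) ∪ Z) < phiSum d X := by
  classical
  unfold phiSum
  have e1 : (Set.toFinite ((X \ F) ∪ Z)).toFinset =
      (Set.toFinite (X \ F)).toFinset ∪ (Set.toFinite Z).toFinset := by ext; simp
  have e2 : (Set.toFinite X).toFinset =
      (Set.toFinite (X \ F)).toFinset ∪ (Set.toFinite (X ∩ F)).toFinset := by
    ext x; by_cases h : x ∈ F <;> simp [h]
  rw [e1, e2, Finset.sum_union (by rw [Set.Finite.disjoint_toFinset]; exact hd),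
    Finset.sum_union (by
      rw [Set.Finite.disjoint_toFinset, Set.disjoint_left]; intro x h1 h2; exact h1.2 h2.2)]
  have c1 : (Set.toFinite Z).toFinset.card = Z.ncard := (Set.ncard_eq_toFinset_card Z).symm
  have c2 : (Set.toFinite (X ∩ F)).toFinset.card = (X ∩ F).ncard :=
    (Set.ncard_eq_toFinset_card _).symm
  have h1 : ∑ x ∈ (Set.toFinite Z).toFinset, d x ≤ (Set.toFinite Z).toFinset.card * m := by
    apply Finset.sum_le_card_nsmul
    intro z hz; exact hZ z (by simpa using hz)
  have h2 : (Set.toFinite (X ∩ F)).toFinset.card * (m + 1) ≤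
      ∑ x ∈ (Set.toFinite (X ∩ F)).toFinset, d x := by
    rw [← smul_eq_mul]
    apply Finset.card_nsmul_le_sum
    intro z hz; exact hX z (by simpa using hz)
  have h3 : 0 < (X ∩ F).ncard := (Set.ncard_pos (Set.toFinite _)).2 hne
  rw [c1, hc] at h1
  rw [c2] at h2
  nlinarith

def BadSep {V : Type} (G : SimpleGraph V) (k : ℕ) (S A B : Set V) : Prop :=
  IsSeparation G A B ∧ (A ∩ B).ncard ≤ k ∧ (A ∩ B).ncard < (A ∩ S).ncard ∧
    (A ∩ B).ncard < (B ∩ S).ncard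

theorem sep_symm {V : Type} {G : SimpleGraph V} {A B : Set V} (h : IsSeparation G A B) :
    IsSeparation G B A :=
  ⟨by rw [Set.union_comm]; exact h.1, fun u v huv hu hv => h.2 v u huv.symm hv hu⟩

theorem BadSep.symm {V : Type} {G : SimpleGraph V} {k : ℕ} {S A B : Set V}
    (h : BadSep G k S A B) : BadSep G k S B A := by
  obtain ⟨h1, h2, h3, h4⟩ := h
  refine ⟨sep_symm h1, ?_, ?_, ?_⟩ <;> rw [Set.inter_comm B A] <;> assumption

def MinSep {V : Type} [Fintype V] (G : SimpleGraph V) (k : ℕ) (S : Set V) (d : V → ℕ)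
    (A B : Set V) : Prop :=
  BadSep G k S A B ∧ ∀ A' B', BadSep G k S A' B' →
    (A ∩ B).ncard ≤ (A' ∩ B').ncard ∧
    ((A ∩ B).ncard = (A' ∩ B').ncard → phiSum d (A ∩ B) ≤ phiSum d (A' ∩ B'))

theorem MinSep.symm {V : Type} [Fintype V] {G : SimpleGraph V} {k : ℕ} {S A B : Set V}
    {d : V → ℕ} (h : MinSep G k S d A B) : MinSep G k S d B A := by
  refine ⟨h.1.symm, ?_⟩
  rw [Set.inter_comm B A]; exact h.2

theorem exists_minSep {V : Type} [Fintype V] {G : SimpleGraph V} {k : ℕ} {S A₀ B₀ : Set V}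
    (d : V → ℕ) (h : BadSep G k S A₀ B₀) : ∃ A B, MinSep G k S d A B := by
  let f : Set V × Set V → ℕ ×ₗ ℕ := fun p => toLex ((p.1 ∩ p.2).ncard, phiSum d (p.1 ∩ p.2))
  obtain ⟨⟨A, B⟩, hm, hmin⟩ := (InvImage.wf f wellFounded_lt).has_min
    {p : Set V × Set V | BadSep G k S p.1 p.2} ⟨(A₀, B₀), h⟩
  refine ⟨A, B, hm, ?_⟩
  intro A' B' h'
  have h1 : ¬ f (A', B') < f (A, B) := hmin (A', B') h'
  rw [Prod.Lex.lt_iff] at h1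
  simp only [f, ofLex_toLex] at h1
  push Not at h1
  exact ⟨h1.1, fun e => h1.2 e.symm⟩

theorem MinSep.exch {V : Type} [Fintype V] {G : SimpleGraph V} {k : ℕ} {S A B : Set V}
    {d : V → ℕ} (h : MinSep G k S d A B) (F Y : Set V)
    (hF : ∀ u v, u ∈ F → G.Adj u v → v ∉ F → v ∈ Y) (hYF : ∀ v ∈ Y, v ∉ F)
    (hS : ∀ v ∈ S, v ∉ F) :
    (A ∩ B ∩ F).ncard ≤ (Y ∩ (B \ A)).ncard ∧
    (∀ m, (∀ y ∈ Y, d y ≤ m) → (∀ x ∈ F, m < d x) → (A ∩ B ∩ F).Nonempty →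
      (A ∩ B ∩ F).ncard < (Y ∩ (B \ A)).ncard) := by
  obtain ⟨⟨hsep, hk, hA, hB⟩, hmin⟩ := h
  let A' := A ∪ F ∪ (Y ∩ B)
  let B' := B \ F
  have hI : A' ∩ B' = (A ∩ B) \ F ∪ (Y ∩ (B \ A)) := by
    ext x
    have := hYF x
    simp only [A', B', Set.mem_inter_iff, Set.mem_union, Set.mem_sdiff]
    tauto
  have hdisj : Disjoint ((A ∩ B) \ F) (Y ∩ (B \ A)) := by
    rw [Set.disjoint_left]; intro x h1 h2; exact h2.2.2 h1.1.1
  have hcard : (A' ∩ B').ncard = ((A ∩ B) \ F).ncard + (Y ∩ (B \ A)).ncard := by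
    rw [hI, Set.ncard_union_eq hdisj]
  have hcard2 : (A ∩ B ∩ F).ncard + ((A ∩ B) \ F).ncard = (A ∩ B).ncard :=
    Set.ncard_inter_add_ncard_sdiff_eq_ncard _ _
  have hsep' : IsSeparation G A' B' := by
    constructor
    · rw [Set.eq_univ_iff_forall]
      intro x
      have : x ∈ A ∪ B := by rw [hsep.1]; trivial
      simp only [A', B', Set.mem_union, Set.mem_inter_iff, Set.mem_sdiff] at this ⊢
      tauto
    · intro u v huv hu hv
      have h1 := hsep.2 u v huv
      have h2 := hF u v
      have hv' : v ∈ A ∪ B := by rw [hsep.1]; trivial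
      have hu' : u ∈ A ∪ B := by rw [hsep.1]; trivial
      have h3 := hYF u
      simp only [A', B', Set.mem_union, Set.mem_inter_iff, Set.mem_sdiff] at hu hv h1 hv' hu'
      tauto
  have hAS : (A ∩ S).ncard ≤ (A' ∩ S).ncard :=
    Set.ncard_le_ncard (by
      intro x hx; exact ⟨Or.inl (Or.inl hx.1), hx.2⟩) (Set.toFinite _)
  have hBS : (B ∩ S).ncard ≤ (B' ∩ S).ncard :=
    Set.ncard_le_ncard (by
      intro x hx; exact ⟨⟨hx.1, hS x hx.2⟩, hx.2⟩) (Set.toFinite _)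
  have first : (A ∩ B ∩ F).ncard ≤ (Y ∩ (B \ A)).ncard := by
    by_contra hlt
    push Not at hlt
    have := (hmin A' B' ⟨hsep', by omega, by omega, by omega⟩).1
    omega
  refine ⟨first, ?_⟩
  intro m hm1 hm2 hne
  by_contra hlt
  have heq : (Y ∩ (B \ A)).ncard = (A ∩ B ∩ F).ncard := by omega
  have := (hmin A' B' ⟨hsep', by omega, by omega, by omega⟩).2 (by omega)
  rw [hI] at this
  have h2 := phiSum_exch d (A ∩ B) F (Y ∩ (B \ A)) m hdisj heq hne
    (fun z hz => hm1 z hz.1) (fun x hx => hm2 x hx.2)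
  omega

namespace RTD

variable {V ι : Type} [Fintype V] {G : SimpleGraph V} {k : ℕ} {root : ι} {parent : ι → ι}
    {β : ι → Set V} {τ : V → ι}

def strictBelow (parent : ι → ι) (τ : V → ι) (s : ι) : Set V :=
  {v | IsAncestor parent s (τ v) ∧ τ v ≠ s}

def below (parent : ι → ι) (τ : V → ι) (s : ι) : Set V :=
  {v | IsAncestor parent s (τ v)}

theorem node_bound (h : RTD G k root parent β τ) {A B : Set V}
    (hm : MinSep G k (β root) (fun v => h.depth (τ v)) A B) (s : ι)
    (hne : (A ∩ B ∩ strictBelow parent τ s).Nonempty) :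
    (A ∩ B ∩ strictBelow parent τ s).ncard < (β s ∩ (B \ A)).ncard := by
  refine (hm.exch (strictBelow parent τ s) (β s) ?_ ?_ ?_).2 (h.depth s) ?_ ?_ hne
  · intro u v hu huv hv
    by_cases h1 : IsAncestor parent s (τ v)
    · have : τ v = s := by
        by_contra e; exact hv ⟨h1, e⟩
      rw [← this]; exact h.mem_top v
    · exact (h.edge_out hu.1 huv h1).1
  · intro v hv hv2
    exact hv2.2 (h.anc_antisymm (h.top_anc hv) hv2.1)
  · intro v hv hv2
    have e := h.anc_root (h.top_anc hv)
    rw [strictBelow, Set.mem_ofPred_eq, e] at hv2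
    exact hv2.2 (h.anc_root hv2.1).symm
  · intro y hy
    exact h.depth_le (h.top_anc hy)
  · intro x hx
    exact h.depth_lt hx.1 hx.2.symm

theorem edge_bound (h : RTD G k root parent β τ) {A B : Set V}
    (hm : MinSep G k (β root) (fun v => h.depth (τ v)) A B) (s : ι) (hs : s ≠ root) :
    (A ∩ B ∩ below parent τ s).ncard ≤ ((β s ∩ β (parent s)) ∩ (B \ A)).ncard := by
  refine (hm.exch (below parent τ s) (β s ∩ β (parent s)) ?_ ?_ ?_).1
  · intro u v hu huv hv
    have := h.edge_out hu huv hv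
    exact ⟨this.1, this.2.2⟩
  · intro v hv hv2
    exact h.not_anc_of_mem_parent hs hv.2 hv2
  · intro v hv hv2
    have e := h.anc_root (h.top_anc hv)
    rw [below, Set.mem_ofPred_eq, e] at hv2
    exact hs (h.anc_root hv2)

def side (A B : Set V) (b : Bool) : Set V := if b then A else B

def newBag (parent : ι → ι) (τ : V → ι) (β : ι → Set V) (A B : Set V) (p : ι × Bool) : Set V :=
  (β p.1 ∩ side A B p.2) ∪ (A ∩ B ∩ strictBelow parent τ p.1)

open Classical in
noncomputable def newParent (root : ι) (parent : ι → ι) (p : ι × Bool) : ι × Bool :=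
  if p.1 = root then (root, true) else (parent p.1, p.2)

open Classical in
noncomputable def newTop (root : ι) (τ : V → ι) (A B : Set V) (v : V) : ι × Bool :=
  if v ∈ A ∧ v ∈ B then (root, true) else (τ v, decide (v ∈ A))

theorem inter_sub_side {A B : Set V} {b : Bool} {v : V} (h : v ∈ A ∩ B) : v ∈ side A B b := by
  cases b
  · exact h.2
  · exact h.1

theorem mem_newBag_of_inter (h : RTD G k root parent β τ) {A B : Set V} {v : V} {s : ι} {b : Bool}
    (hv : v ∈ A ∩ B) (hs : IsAncestor parent s (τ v)) : v ∈ newBag parent τ β A B (s, b) := by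
  by_cases e : τ v = s
  · left; exact ⟨by rw [← e]; exact h.mem_top v, inter_sub_side hv⟩
  · right; exact ⟨hv, hs, e⟩

theorem surgery (h : RTD G k root parent β τ) {A B : Set V}
    (hm : MinSep G k (β root) (fun v => h.depth (τ v)) A B) :
    RTD G k (root, true) (newParent root parent) (newBag parent τ β A B)
      (newTop root τ A B) where
  parent_root := by simp [newParent]
  reaches := by
    rintro ⟨t, b⟩
    obtain ⟨n, hn⟩ := h.reaches t
    induction n generalizing t with
    | zero => exact ⟨1, by simp [newParent, show t = root from hn]⟩
    | succ n ih =>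
      by_cases e : t = root
      · exact ⟨1, by simp [newParent, e]⟩
      · obtain ⟨m, hm⟩ := ih (parent t) hn
        exact ⟨m + 1, by rw [Function.iterate_succ_apply]; simpa [newParent, e] using hm⟩
  mem_top := by
    intro v
    unfold newTop
    split_ifs with hv
    · exact h.mem_newBag_of_inter hv (h.reaches _)
    · left
      refine ⟨h.mem_top v, ?_⟩
      have : v ∈ A ∪ B := by rw [hm.1.1.1]; trivial
      by_cases hA : v ∈ A
      · simpa [side, hA] using hA
      · simpa [side, hA] using this
  up := by
    classical
    rintro v ⟨s, b⟩ hv hne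
    unfold newTop at hne
    split_ifs at hne with hX
    · refine ⟨hne, ?_⟩
      by_cases e : s = root
      · simp only [newParent, e, if_true]
        exact h.mem_newBag_of_inter hX (h.reaches _)
      · simp only [newParent, e, if_false]
        rcases hv with hv | hv
        · by_cases e2 : s = τ v
          · apply h.mem_newBag_of_inter hX
            rw [e2]; exact anc_parent_self _ _
          · left; exact ⟨(h.up v s hv.1 e2).2, hv.2⟩
        · apply h.mem_newBag_of_inter hX
          exact anc_parent hv.2.1
    · rcases hv with hv | hv
      · have hb : b = decide (v ∈ A) := by
          cases b
          · have : v ∈ B := hv.2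
            simp; tauto
          · have : v ∈ A := hv.2
            simp [this]
        have e2 : s ≠ τ v := by
          rintro e2; exact hne (by rw [e2, hb])
        have := h.up v s hv.1 e2
        refine ⟨?_, ?_⟩
        · intro e; exact this.1 (congrArg Prod.fst e)
        · simp only [newParent, this.1, if_false]
          left; exact ⟨this.2, hv.2⟩
      · exact absurd hv.1 hX
  adj := by
    intro u v huv
    obtain ⟨q, hu, hv⟩ := h.adj u v huv
    have h1 := hm.1.1.2 u v huv
    have h2 := hm.1.1.2 v u huv.symm
    have hv' : v ∈ A ∪ B := by rw [hm.1.1.1]; trivial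
    have hu' : u ∈ A ∪ B := by rw [hm.1.1.1]; trivial
    simp only [Set.mem_sdiff, Set.mem_union] at h1 h2 hv' hu'
    by_cases hA : u ∈ A ∧ v ∈ A
    · exact ⟨(q, true), Or.inl ⟨hu, hA.1⟩, Or.inl ⟨hv, hA.2⟩⟩
    · have hB : u ∈ B ∧ v ∈ B := by tauto
      exact ⟨(q, false), Or.inl ⟨hu, hB.1⟩, Or.inl ⟨hv, hB.2⟩⟩
  adh := by
    rintro ⟨s, b⟩ hs
    by_cases e : s = root
    · subst e
      have hb : b = false := by
        cases b
        · rfl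
        · exact absurd rfl hs
      subst hb
      refine le_trans (Set.ncard_le_ncard ?_ (Set.toFinite _)) hm.1.2.1
      simp only [newParent, if_true]
      rintro x ⟨hx1, hx2⟩
      rcases hx1 with hx1 | hx1
      · rcases hx2 with hx2 | hx2
        · exact ⟨hx2.2, hx1.2⟩
        · exact hx2.1
      · exact hx1.1
    · simp only [newParent, e, if_false]
      have hsub : newBag parent τ β A B (s, b) ∩ newBag parent τ β A B (parent s, b) ⊆
          ((β s ∩ β (parent s)) ∩ side A B b) ∪ (A ∩ B ∩ below parent τ s) := by
        rintro x ⟨hx1, hx2⟩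
        rcases hx1 with hx1 | hx1
        · rcases hx2 with hx2 | hx2
          · exact Or.inl ⟨⟨hx1.1, hx2.1⟩, hx1.2⟩
          · by_cases e2 : s = τ x
            · right; exact ⟨hx2.1, by rw [below, Set.mem_ofPred_eq, ← e2]; exact anc_refl _ _⟩
            · left; exact ⟨⟨hx1.1, (h.up x s hx1.1 e2).2⟩, hx1.2⟩
        · right; exact ⟨hx1.1, hx1.2.1⟩
      have h1 := Set.ncard_le_ncard hsub (Set.toFinite _)
      have h2 := Set.ncard_union_le ((β s ∩ β (parent s)) ∩ side A B b) (A ∩ B ∩ below parent τ s)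
      have h3 := h.adh s e
      cases b
      · have h4 := h.edge_bound hm.symm s e
        rw [Set.inter_comm B A] at h4
        have h5 : (β s ∩ β (parent s) ∩ B).ncard + (β s ∩ β (parent s) ∩ (A \ B)).ncard
            ≤ (β s ∩ β (parent s)).ncard := by
          rw [← Set.ncard_union_eq (by
            rw [Set.disjoint_left]; intro x h1 h2; exact h2.2.2 h1.2)]
          apply Set.ncard_le_ncard _ (Set.toFinite _)
          intro x hx
          rcases hx with hx | hx <;> exact hx.1
        simp only [side, Bool.false_eq_true, if_false] at h1 h2
        omega
      · have h4 := h.edge_bound hm s e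
        have h5 : (β s ∩ β (parent s) ∩ A).ncard + (β s ∩ β (parent s) ∩ (B \ A)).ncard
            ≤ (β s ∩ β (parent s)).ncard := by
          rw [← Set.ncard_union_eq (by
            rw [Set.disjoint_left]; intro x h1 h2; exact h2.2.2 h1.2)]
          apply Set.ncard_le_ncard _ (Set.toFinite _)
          intro x hx
          rcases hx with hx | hx <;> exact hx.1
        simp only [side, if_true] at h1 h2
        omega

end RTD

namespace RTD

variable {V ι : Type} [Fintype V] {G : SimpleGraph V} {k : ℕ} {root : ι} {parent : ι → ι}
    {β : ι → Set V} {τ : V → ι}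

theorem bag_lt_true (h : RTD G k root parent β τ) {A B : Set V} {s : ι}
    (hlt : (A ∩ B ∩ strictBelow parent τ s).ncard < (β s ∩ (B \ A)).ncard) :
    (newBag parent τ β A B (s, true)).ncard < (β s).ncard := by
  have h1 := Set.ncard_union_le (β s ∩ side A B true) (A ∩ B ∩ strictBelow parent τ s)
  have h5 : (β s ∩ A).ncard + (β s ∩ (B \ A)).ncard ≤ (β s).ncard := by
    rw [← Set.ncard_union_eq (by
      rw [Set.disjoint_left]; intro x h1 h2; exact h2.2.2 h1.2)]
    apply Set.ncard_le_ncard _ (Set.toFinite _)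
    intro x hx
    rcases hx with hx | hx <;> exact hx.1
  have h6 : (newBag parent τ β A B (s, true)).ncard ≤
    (β s ∩ A).ncard + (A ∩ B ∩ strictBelow parent τ s).ncard := h1
  omega

theorem bag_lt_false (h : RTD G k root parent β τ) {A B : Set V} {s : ι}
    (hlt : (A ∩ B ∩ strictBelow parent τ s).ncard < (β s ∩ (A \ B)).ncard) :
    (newBag parent τ β A B (s, false)).ncard < (β s).ncard := by
  have h1 := Set.ncard_union_le (β s ∩ side A B false) (A ∩ B ∩ strictBelow parent τ s)
  have h5 : (β s ∩ B).ncard + (β s ∩ (A \ B)).ncard ≤ (β s).ncard := by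
    rw [← Set.ncard_union_eq (by
      rw [Set.disjoint_left]; intro x h1 h2; exact h2.2.2 h1.2)]
    apply Set.ncard_le_ncard _ (Set.toFinite _)
    intro x hx
    rcases hx with hx | hx <;> exact hx.1
  have h6 : (newBag parent τ β A B (s, false)).ncard ≤
    (β s ∩ B).ncard + (A ∩ B ∩ strictBelow parent τ s).ncard := h1
  omega

theorem root_lt {A B S F : Set V} (hF : ∀ v ∈ S, v ∉ F) (hlt : (A ∩ B).ncard < (B ∩ S).ncard) :
    (A ∩ B ∩ F).ncard < (S ∩ (B \ A)).ncard := by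
  have h1 : (A ∩ B ∩ F).ncard + (A ∩ B ∩ S).ncard ≤ (A ∩ B).ncard := by
    rw [← Set.ncard_union_eq (by
      rw [Set.disjoint_left]; intro x h1 h2; exact hF x h2.2 h1.2)]
    apply Set.ncard_le_ncard _ (Set.toFinite _)
    intro x hx
    rcases hx with hx | hx <;> exact hx.1
  have h2 : (B ∩ S).ncard ≤ (A ∩ B ∩ S).ncard + (S ∩ (B \ A)).ncard := by
    refine le_trans (Set.ncard_le_ncard ?_ (Set.toFinite _)) (Set.ncard_union_le _ _)
    intro x hx
    by_cases hA : x ∈ A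
    · left; exact ⟨⟨hA, hx.1⟩, hx.2⟩
    · right; exact ⟨hx.2, hx.1, hA⟩
  omega

theorem root_disj (h : RTD G k root parent β τ) :
    ∀ v ∈ β root, v ∉ strictBelow parent τ root := by
  intro v hv hv2
  exact hv2.2 (h.anc_root (h.top_anc hv))

theorem node_split (h : RTD G k root parent β τ) {A B : Set V}
    (hm : MinSep G k (β root) (fun v => h.depth (τ v)) A B) (s : ι) :
    ∃ X Y Z : Multiset ℕ,
      ({(newBag parent τ β A B (s, true)).ncard} + {(newBag parent τ β A B (s, false)).ncard}
        : Multiset ℕ) = X + Y ∧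
      ({(β s).ncard} : Multiset ℕ) = X + Z ∧
      (∀ y ∈ Y, (∃ z ∈ Z, y < z) ∨ y < (β root).ncard) ∧
      (s = root → Z = {(β root).ncard}) := by
  obtain ⟨hsep, hk, hA, hB⟩ := hm.1
  have hXlt : (A ∩ B).ncard < (β root).ncard :=
    lt_of_lt_of_le hA (Set.ncard_le_ncard Set.inter_subset_right (Set.toFinite _))
  have hcov : ∀ v, v ∈ A ∨ v ∈ B := by
    intro v
    have : v ∈ A ∪ B := by rw [hsep.1]; trivial
    exact this
  -- both smaller
  have both : (newBag parent τ β A B (s, true)).ncard < (β s).ncard →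
      (newBag parent τ β A B (s, false)).ncard < (β s).ncard →
      ∃ X Y Z : Multiset ℕ,
      ({(newBag parent τ β A B (s, true)).ncard} + {(newBag parent τ β A B (s, false)).ncard}
        : Multiset ℕ) = X + Y ∧
      ({(β s).ncard} : Multiset ℕ) = X + Z ∧
      (∀ y ∈ Y, (∃ z ∈ Z, y < z) ∨ y < (β root).ncard) ∧
      (s = root → Z = {(β root).ncard}) := by
    intro h1 h2
    refine ⟨0, _, {(β s).ncard}, (zero_add _).symm, (zero_add _).symm, ?_, ?_⟩
    · intro y hy
      left
      refine ⟨_, Multiset.mem_singleton_self _, ?_⟩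
      rw [Multiset.mem_add, Multiset.mem_singleton, Multiset.mem_singleton] at hy
      rcases hy with rfl | rfl <;> assumption
    · rintro rfl; rfl
  by_cases hr : s = root
  · subst hr
    refine both (h.bag_lt_true (root_lt h.root_disj hB)) (h.bag_lt_false ?_)
    have := root_lt (A := B) (B := A) h.root_disj (by rw [Set.inter_comm B A]; exact hA)
    rwa [Set.inter_comm B A] at this
  by_cases hne : (A ∩ B ∩ strictBelow parent τ s).Nonempty
  · refine both (h.bag_lt_true (h.node_bound hm s hne)) (h.bag_lt_false ?_)
    have := h.node_bound hm.symm s (by rw [Set.inter_comm B A]; exact hne)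
    rwa [Set.inter_comm B A] at this
  rw [Set.not_nonempty_iff_eq_empty] at hne
  have bt : newBag parent τ β A B (s, true) = β s ∩ A := by
    simp [newBag, hne, side]
  have bf : newBag parent τ β A B (s, false) = β s ∩ B := by
    simp [newBag, hne, side]
  by_cases hsA : β s ⊆ A
  · refine ⟨{(β s).ncard}, {(β s ∩ B).ncard}, 0, ?_, (add_zero _).symm, ?_, fun e => absurd e hr⟩
    · rw [bt, bf, Set.inter_eq_left.2 hsA]
    · intro y hy
      right
      rw [Multiset.mem_singleton] at hy
      subst hy
      refine lt_of_le_of_lt (Set.ncard_le_ncard ?_ (Set.toFinite _)) hXlt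
      intro x hx; exact ⟨hsA hx.1, hx.2⟩
  by_cases hsB : β s ⊆ B
  · refine ⟨{(β s).ncard}, {(β s ∩ A).ncard}, 0, ?_, (add_zero _).symm, ?_, fun e => absurd e hr⟩
    · rw [bt, bf, Set.inter_eq_left.2 hsB, add_comm]
    · intro y hy
      right
      rw [Multiset.mem_singleton] at hy
      subst hy
      refine lt_of_le_of_lt (Set.ncard_le_ncard ?_ (Set.toFinite _)) hXlt
      intro x hx; exact ⟨hx.2, hsB hx.1⟩
  rw [Set.not_subset] at hsA hsB
  obtain ⟨a, ha, ha2⟩ := hsA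
  obtain ⟨b, hb, hb2⟩ := hsB
  apply both
  · rw [bt]
    apply Set.ncard_lt_ncard _ (Set.toFinite _)
    exact ⟨Set.inter_subset_left, fun hh => ha2 (hh ha).2⟩
  · rw [bf]
    apply Set.ncard_lt_ncard _ (Set.toFinite _)
    exact ⟨Set.inter_subset_left, fun hh => hb2 (hh hb).2⟩

noncomputable def sizes {V ι : Type} [Fintype ι] (β : ι → Set V) : Multiset ℕ :=
  ∑ s : ι, {(β s).ncard}

theorem sizes_lt [Fintype ι] (h : RTD G k root parent β τ) {A B : Set V}
    (hm : MinSep G k (β root) (fun v => h.depth (τ v)) A B) :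
    Multiset.IsDershowitzMannaLT (sizes (newBag parent τ β A B)) (sizes β) := by
  classical
  choose X Y Z h1 h2 h3 h4 using h.node_split hm
  have hroot : (β root).ncard ∈ ∑ s, Z s := by
    rw [Multiset.mem_sum]
    exact ⟨root, Finset.mem_univ _, by rw [h4 root rfl]; exact Multiset.mem_singleton_self _⟩
  refine ⟨∑ s, X s, ∑ s, Y s, ∑ s, Z s, ?_, ?_, ?_, ?_⟩
  · intro e
    rw [e] at hroot
    exact Multiset.notMem_zero _ hroot
  · rw [← Finset.sum_add_distrib, sizes, Fintype.sum_prod_type]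
    apply Finset.sum_congr rfl
    intro s _
    rw [Fintype.sum_bool]
    exact h1 s
  · rw [← Finset.sum_add_distrib, sizes]
    apply Finset.sum_congr rfl
    intro s _
    exact h2 s
  · intro y hy
    rw [Multiset.mem_sum] at hy
    obtain ⟨s, -, hy⟩ := hy
    rcases h3 s y hy with ⟨z, hz, hlt⟩ | hlt
    · exact ⟨z, by rw [Multiset.mem_sum]; exact ⟨s, Finset.mem_univ _, hz⟩, hlt⟩
    · exact ⟨_, hroot, hlt⟩

end RTD

theorem exists_lean {V : Type} [Fintype V] (G : SimpleGraph V) (k : ℕ) :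
    ∃ (ι : Type) (_ : Fintype ι) (root : ι) (parent : ι → ι) (β : ι → Set V) (τ : V → ι),
      RTD G k root parent β τ ∧
      ∀ t : ι, ∀ i : ℕ, 1 ≤ i → i ≤ k → IsUnbreakable G (β t) i i := by
  suffices H : ∀ M : Multiset ℕ, ∀ (ι : Type) (_ : Fintype ι) (root : ι) (parent : ι → ι)
      (β : ι → Set V) (τ : V → ι), RTD G k root parent β τ → RTD.sizes β = M →
      ∃ (ι : Type) (_ : Fintype ι) (root : ι) (parent : ι → ι) (β : ι → Set V) (τ : V → ι),
      RTD G k root parent β τ ∧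
      ∀ t : ι, ∀ i : ℕ, 1 ≤ i → i ≤ k → IsUnbreakable G (β t) i i by
    refine H _ Unit inferInstance () id (fun _ => Set.univ) (fun _ => ()) ?_ rfl
    exact ⟨rfl, fun _ => ⟨0, rfl⟩, fun _ => trivial, fun v s _ hs => absurd rfl hs,
      fun u v _ => ⟨(), trivial, trivial⟩, fun s hs => absurd rfl hs⟩
  intro M
  induction M using (Multiset.wellFounded_isDershowitzMannaLT (α := ℕ)).induction with
  | _ M ih =>
  intro ι _ root parent β τ h hM
  by_cases hgood : ∀ t : ι, ∀ i : ℕ, 1 ≤ i → i ≤ k → IsUnbreakable G (β t) i i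
  · exact ⟨ι, inferInstance, root, parent, β, τ, h, hgood⟩
  push Not at hgood
  obtain ⟨t, i, -, hik, hbr⟩ := hgood
  unfold IsUnbreakable at hbr
  push Not at hbr
  obtain ⟨A₀, B₀, hs, ho, h1, h2⟩ := hbr
  obtain ⟨p', τ', h'⟩ := h.reroot t
  have hbad : BadSep G k (β t) A₀ B₀ := ⟨hs, by omega, by omega, by omega⟩
  obtain ⟨A, B, hm⟩ := exists_minSep (fun v => h'.depth (τ' v)) hbad
  exact ih _ (by rw [← hM]; exact h'.sizes_lt hm) (ι × Bool) inferInstance _ _ _ _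
    (h'.surgery hm) rfl

end Surgery

section Compactify

theorem conn_sub {V : Type} {G : SimpleGraph V} {C D : Set V} (hC : (G.induce C).Connected)
    {v : V} (hvC : v ∈ C) (hvD : v ∈ D) (hcl : ∀ a ∈ D, ∀ b ∈ C, G.Adj a b → b ∈ D) : C ⊆ D := by
  intro u hu
  have hr := hC.preconnected ⟨v, hvC⟩ ⟨u, hu⟩
  rw [SimpleGraph.reachable_iff_reflTransGen] at hr
  have : ∀ w : C, Relation.ReflTransGen (G.induce C).Adj ⟨v, hvC⟩ w → (w : V) ∈ D := by
    intro w hw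
    induction hw with
    | refl => exact hvD
    | tail _ hab ih => exact hcl _ ih _ (Subtype.coe_prop _) hab
  exact this _ hr

theorem exists_comp {V : Type} [Fintype V] (G : SimpleGraph V) (W : Set V) (v : V) (hv : v ∈ W) :
    ∃ D, v ∈ D ∧ D ⊆ W ∧ (G.induce D).Connected ∧ ∀ a ∈ D, ∀ b ∈ W, G.Adj a b → b ∈ D := by
  obtain ⟨D, hD⟩ := (Set.toFinite {D : Set V | v ∈ D ∧ D ⊆ W ∧ (G.induce D).Connected}).exists_maximal
    ⟨{v}, rfl, by simpa using hv, by
      rw [SimpleGraph.connected_iff]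
      exact ⟨SimpleGraph.Preconnected.of_subsingleton, ⟨⟨v, rfl⟩⟩⟩⟩
  refine ⟨D, hD.1.1, hD.1.2.1, hD.1.2.2, ?_⟩
  intro a ha b hb hab
  have h1 : (G.induce (D ∪ {a, b})).Connected := by
    apply SimpleGraph.induce_union_connected hD.1.2.2.preconnected
      (SimpleGraph.induce_pair_connected_of_adj hab).preconnected
    exact ⟨a, ha, by simp⟩
  have h2 : D ∪ {a, b} ⊆ D := by
    apply hD.2 _ Set.subset_union_left
    refine ⟨Or.inl hD.1.1, ?_, h1⟩
    intro x hx
    rcases hx with hx | hx | hx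
    · exact hD.1.2.1 hx
    · rw [hx]; exact hD.1.2.1 ha
    · rw [show x = b from hx]; exact hb
  exact h2 (by simp)

namespace RTD

variable {V ι : Type} [Fintype V] {G : SimpleGraph V} {k : ℕ} {root : ι} {parent : ι → ι}
    {β : ι → Set V} {τ : V → ι}

structure IsNode (G : SimpleGraph V) (root : ι) (parent : ι → ι) (τ : V → ι) (s : ι) (D : Set V) :
    Prop where
  sub : D ⊆ below parent τ s
  closed : ∀ a ∈ D, ∀ b ∈ below parent τ s, G.Adj a b → b ∈ D
  conn : s ≠ root → (G.induce D).Connected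
  univ : s = root → D = Set.univ

theorem exists_node (h : RTD G k root parent β τ) {s : ι} {v : V} (hv : v ∈ below parent τ s) :
    ∃ D, IsNode G root parent τ s D ∧ v ∈ D := by
  by_cases e : s = root
  · refine ⟨Set.univ, ⟨?_, fun _ _ _ _ _ => trivial, fun h => absurd e h, fun _ => rfl⟩, trivial⟩
    intro x _
    rw [e]; exact h.reaches _
  · obtain ⟨D, h1, h2, h3, h4⟩ := exists_comp G _ v hv
    exact ⟨D, ⟨h2, h4, fun _ => h3, fun h => absurd h e⟩, h1⟩

theorem node_unique {s : ι} {D D' : Set V} (h1 : IsNode G root parent τ s D)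
    (h2 : IsNode G root parent τ s D') {v : V} (hv : v ∈ D) (hv' : v ∈ D') : D = D' := by
  by_cases e : s = root
  · rw [h1.univ e, h2.univ e]
  · apply Set.Subset.antisymm
    · exact conn_sub (h1.conn e) hv hv' (fun a ha b hb => h2.closed a ha b (h1.sub hb))
    · exact conn_sub (h2.conn e) hv' hv (fun a ha b hb => h1.closed a ha b (h2.sub hb))

theorem node_parent (h : RTD G k root parent β τ) {s : ι} {D : Set V}
    (hD : IsNode G root parent τ s D) :
    ∃ D', IsNode G root parent τ (parent s) D' ∧ D ⊆ D' := by
  by_cases e : s = root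
  · refine ⟨D, ?_, subset_rfl⟩
    subst e
    rw [h.parent_root]; exact hD
  · obtain ⟨⟨v, hv⟩⟩ := (hD.conn e).nonempty
    have hsub : below parent τ s ⊆ below parent τ (parent s) := fun x hx => anc_parent hx
    obtain ⟨D', h1, h2⟩ := h.exists_node (hsub (hD.sub hv))
    exact ⟨D', h1, conn_sub (hD.conn e) hv h2
      (fun a ha b hb => h1.closed a ha b (hsub (hD.sub hb)))⟩

theorem node_nbhd (h : RTD G k root parent β τ) {s : ι} {D : Set V}
    (hD : IsNode G root parent τ s D) {v : V} (hv : v ∈ nbhd G D) :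
    v ∈ β s ∧ s ≠ root ∧ v ∈ β (parent s) := by
  obtain ⟨h1, u, hu, huv⟩ := hv
  exact h.edge_out (hD.sub hu) huv (fun hb => h1 (hD.closed u hu v hb huv))

theorem nbhd_mono {D D' : Set V} (hs : D ⊆ D') {v : V} (hv : v ∈ nbhd G D) :
    v ∈ D' ∨ v ∈ nbhd G D' := by
  obtain ⟨h1, u, hu, huv⟩ := hv
  by_cases h : v ∈ D'
  · exact Or.inl h
  · exact Or.inr ⟨h, u, hs hu, huv⟩

theorem compactify [Fintype ι] (h : RTD G k root parent β τ) :
    ∃ (ι' : Type) (_ : Fintype ι') (root' : ι') (parent' : ι' → ι') (β' : ι' → Set V)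
      (τ' : V → ι') (f : ι' → ι), RTD G k root' parent' β' τ' ∧ IsCompactRTD G root' parent' β' ∧
      ∀ t, β' t ⊆ β (f t) := by
  let ι' := {p : ι × Set V // IsNode G root parent τ p.1 p.2}
  have hparex : ∀ p : ι', ∃ p' : ι', p'.1.1 = parent p.1.1 ∧ p.1.2 ⊆ p'.1.2 := by
    rintro ⟨⟨s, D⟩, hp⟩
    obtain ⟨D', h1, h2⟩ := h.node_parent hp
    exact ⟨⟨(parent s, D'), h1⟩, rfl, h2⟩
  choose par hpar1 hpar2 using hparex
  have htopex : ∀ v : V, ∃ p : ι', p.1.1 = τ v ∧ v ∈ p.1.2 := by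
    intro v
    obtain ⟨D, h1, h2⟩ := h.exists_node (s := τ v) (v := v) (anc_refl _ _)
    exact ⟨⟨(τ v, D), h1⟩, rfl, h2⟩
  choose top htop1 htop2 using htopex
  have huniq : ∀ (p q : ι') (v : V), p.1.1 = q.1.1 → v ∈ p.1.2 → v ∈ q.1.2 → p = q := by
    rintro ⟨⟨s, D⟩, hp⟩ ⟨⟨s', D'⟩, hq⟩ v hs hv hv'
    dsimp only at hs hv hv' hp hq
    subst hs
    have := node_unique hp hq hv hv'
    subst this
    rfl
  have hrootN : IsNode G root parent τ root Set.univ :=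
    ⟨fun x _ => h.reaches _, fun _ _ _ _ _ => trivial, fun h => absurd rfl h, fun _ => rfl⟩
  let root' : ι' := ⟨(root, Set.univ), hrootN⟩
  have hroot_eq : ∀ p : ι', p.1.1 = root → p = root' := by
    rintro ⟨⟨s, D⟩, hp⟩ hs
    dsimp only at hs hp
    have := hp.univ hs
    subst hs
    subst this
    rfl
  have hiter : ∀ n (p : ι'), (par^[n] p).1.1 = parent^[n] p.1.1 ∧ p.1.2 ⊆ (par^[n] p).1.2 := by
    intro n
    induction n with
    | zero => intro p; exact ⟨rfl, subset_rfl⟩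
    | succ n ih =>
      intro p
      rw [Function.iterate_succ_apply, Function.iterate_succ_apply, ← hpar1]
      exact ⟨(ih _).1, (hpar2 p).trans (ih _).2⟩
  let bag : ι' → Set V := fun p => (β p.1.1 ∩ p.1.2) ∪ nbhd G p.1.2
  have hbag : ∀ p, bag p ⊆ β p.1.1 := by
    intro p v hv
    rcases hv with hv | hv
    · exact hv.1
    · exact (h.node_nbhd p.2 hv).1
  have hNpar : ∀ p : ι', ∀ v ∈ nbhd G p.1.2, v ∈ bag (par p) := by
    intro p v hv
    rcases nbhd_mono (hpar2 p) hv with h1 | h1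
    · left
      refine ⟨?_, h1⟩
      rw [hpar1]; exact (h.node_nbhd p.2 hv).2.2
    · exact Or.inr h1
  have hmemtop : ∀ v, v ∈ bag (top v) := by
    intro v
    left
    exact ⟨by rw [htop1]; exact h.mem_top v, htop2 v⟩
  have key : ∀ u v q, G.Adj u v → u ∈ β q → v ∈ β q → IsAncestor parent (τ u) (τ v) →
      u ∈ bag (top v) := by
    intro u v q huv hu hv ha
    by_cases hD : u ∈ (top v).1.2
    · left
      refine ⟨?_, hD⟩
      rw [htop1]
      exact h.between hu (h.top_anc hv) ha
    · right
      exact ⟨hD, v, htop2 v, huv.symm⟩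
  have hσ : ∀ p : ι', p ≠ root' → bag p ∩ bag (par p) = nbhd G p.1.2 := by
    intro p hp
    apply Set.Subset.antisymm
    · rintro v ⟨hv1, hv2⟩
      rcases hv1 with hv1 | hv1
      · exfalso
        have := hbag _ hv2
        rw [hpar1] at this
        exact h.not_anc_of_mem_parent (fun e => hp (hroot_eq p e)) this (p.2.sub hv1.2)
      · exact hv1
    · intro v hv
      exact ⟨Or.inr hv, hNpar p v hv⟩
  refine ⟨ι', Fintype.ofFinite _, root', par, bag, top, fun p => p.1.1, ?_, ?_, hbag⟩
  · refine ⟨?_, ?_, hmemtop, ?_, ?_, ?_⟩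
    · apply hroot_eq
      rw [hpar1]; exact h.parent_root
    · intro p
      obtain ⟨n, hn⟩ := h.reaches p.1.1
      exact ⟨n, hroot_eq _ (by rw [(hiter n p).1, hn])⟩
    · intro v p hv hne
      rcases hv with hv | hv
      · exfalso
        have e : p.1.1 = τ v := h.anc_antisymm (p.2.sub hv.2) (h.top_anc hv.1)
        exact hne (huniq p (top v) v (by rw [e, htop1]) hv.2 (htop2 v))
      · refine ⟨?_, hNpar p v hv⟩
        rintro rfl
        exact (h.node_nbhd hrootN hv).2.1 rfl
    · intro u v huv
      obtain ⟨q, hu, hv⟩ := h.adj u v huv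
      rcases anc_comparable (h.top_anc hu) (h.top_anc hv) with ha | ha
      · exact ⟨top v, key u v q huv hu hv ha, hmemtop v⟩
      · exact ⟨top u, hmemtop u, key v u q huv.symm hv hu ha⟩
    · intro p hp
      refine le_trans (Set.ncard_le_ncard ?_ (Set.toFinite _))
        (h.adh p.1.1 (fun e => hp (hroot_eq p e)))
      rw [← hpar1]
      exact Set.inter_subset_inter (hbag _) (hbag _)
  · intro p hp
    have hγ : gammaSet par bag p = p.1.2 ∪ nbhd G p.1.2 := by
      apply Set.Subset.antisymm
      · rintro v ⟨q, ⟨n, hn⟩, hv⟩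
        have hsub := (hiter n q).2
        rw [hn] at hsub
        rcases hv with hv | hv
        · exact Or.inl (hsub hv.2)
        · exact nbhd_mono hsub hv
      · rintro v (hv | hv)
        · refine ⟨top v, ?_, hmemtop v⟩
          obtain ⟨n, hn⟩ := p.2.sub hv
          refine ⟨n, huniq _ _ v ?_ ((hiter n _).2 (htop2 v)) hv⟩
          rw [(hiter n _).1, htop1, hn]
        · exact ⟨p, anc_refl _ _, Or.inr hv⟩
    have hα : alphaSet par bag p = p.1.2 := by
      rw [alphaSet, hγ, hσ p hp]
      ext v
      constructor
      · rintro ⟨h1 | h1, h2⟩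
        · exact h1
        · exact absurd h1 h2
      · intro hv
        exact ⟨Or.inl hv, fun h2 => h2.1 hv⟩
    rw [hα, hσ p hp]
    exact ⟨p.2.conn (fun e => hp (hroot_eq p e)), rfl⟩

end RTD

theorem IsUnbreakable.mono {V : Type} [Fintype V] {G : SimpleGraph V} {S S' : Set V} {q k : ℕ}
    (h : IsUnbreakable G S q k) (hs : S' ⊆ S) : IsUnbreakable G S' q k := by
  intro A B hsep ho
  have hA := Set.ncard_le_ncard (Set.inter_subset_inter_right A hs) (Set.toFinite _)
  have hB := Set.ncard_le_ncard (Set.inter_subset_inter_right B hs) (Set.toFinite _)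
  rcases h A B hsep ho with h1 | h1
  · left; omega
  · right; omega

end Compactify

end TDProof

/-- every finite graph `G` and positive integer `k` admit a rooted
compact tree decomposition with all adhesions of size at most `k` whose every
bag is `(i,i)`-unbreakable in `G` for every `1 ≤ i ≤ k`. -/
theorem exists_rooted_compact_unbreakable_decomposition
    (V : Type) [Fintype V] (G : SimpleGraph V) (k : ℕ) (hk : 0 < k) :
    ∃ (ι : Type) (_ : Fintype ι) (root : ι) (parent : ι → ι) (β : ι → Set V),
      IsRootedTreeDecomp G root parent β ∧
      IsCompactRTD G root parent β ∧
      (∀ t : ι, t ≠ root → (β t ∩ β (parent t)).ncard ≤ k) ∧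
      (∀ t : ι, ∀ i : ℕ, 1 ≤ i → i ≤ k → IsUnbreakable G (β t) i i) := by
  obtain ⟨ι, _, root, parent, β, τ, h, hu⟩ := exists_lean G k
  obtain ⟨ι2, hf, root2, parent2, β2, τ2, f, h2, hc, hsub⟩ := h.compactify
  exact ⟨ι2, hf, root2, parent2, β2, h2.toDecomp, hc, h2.adh,
    fun t i h1 hk => (hu (f t) i h1 hk).mono (hsub t)⟩
end

section
/- There exists a constant c > 0 such that for every finite set U with |U| = n ≥ 2 and all integers a, b with 0 ≤ a, b ≤ n, there exists a family F of subsets of U with |F| ≤ (a+b+2)^{c·min(a,b)} · ⌈log₂ n⌉ such that the following holds: for any sets A, B ⊆ U with A ∩ B = ∅, |A| ≤ a, and |B| ≤ b, there exists a set S ∈ F with A ⊆ S and B ∩ S = ∅. -/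
theorem splitter_greedy {X P : Type} [Fintype X] [DecidableEq X] (R : X → P → Prop) (Q : Finset P) (M : ℕ) (hM : 0 < M)
    (h : ∀ p ∈ Q, ∃ s : Finset X, (∀ x ∈ s, R x p) ∧ Fintype.card X ≤ s.card * M) (hX : Nonempty X) (t : ℕ) :
    ∃ F : Finset X, F.card ≤ t ∧ ∃ Q' : Finset P, (∀ p ∈ Q, (∃ x ∈ F, R x p) ∨ p ∈ Q') ∧ Q' ⊆ Q ∧
      (Q'.card : ℝ) ≤ Q.card * (1 - 1 / (M : ℝ)) ^ t := by
  classical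
  induction t with
  | zero => exact ⟨∅, by simp, Q, fun p hp => Or.inr hp, subset_rfl, by simp⟩
  | succ t ih =>
    obtain ⟨F, hF, Q', hc, hs, hb⟩ := ih
    have hM' : (0 : ℝ) < M := by exact_mod_cast hM
    have key : ∃ x : X, (Q'.card : ℝ) / M ≤ (Q'.filter (fun p => R x p)).card := by
      by_contra hcon
      push Not at hcon
      have h1 : ∑ x : X, ((Q'.filter (fun p => R x p)).card : ℝ) < ∑ x : X, (Q'.card : ℝ) / M :=
        Finset.sum_lt_sum_of_nonempty Finset.univ_nonempty (fun x _ => hcon x)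
      have h2 : ∑ x : X, (Q'.filter (fun p => R x p)).card
          = ∑ p ∈ Q', (Finset.univ.filter (fun x => R x p)).card := by
        simp only [Finset.card_filter]
        exact Finset.sum_comm
      have h3 : ∑ p ∈ Q', (Fintype.card X : ℝ) / M ≤
          ∑ p ∈ Q', ((Finset.univ.filter (fun x => R x p)).card : ℝ) := by
        apply Finset.sum_le_sum
        intro p hp
        obtain ⟨s, hs1, hs2⟩ := h p (hs hp)
        have : s.card ≤ (Finset.univ.filter (fun x => R x p)).card :=
          Finset.card_le_card (fun x hx => by simpa using hs1 x hx)
        rw [div_le_iff₀ hM']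
        have h4 := hs2.trans (Nat.mul_le_mul_right M this)
        exact_mod_cast h4
      have h2' : ∑ x : X, ((Q'.filter (fun p => R x p)).card : ℝ)
          = ∑ p ∈ Q', ((Finset.univ.filter (fun x => R x p)).card : ℝ) := by
        exact_mod_cast h2
      rw [h2'] at h1
      have h5 := h3.trans_lt h1
      simp only [Finset.sum_const, nsmul_eq_mul, Finset.card_univ] at h5
      apply lt_irrefl _ (h5.trans_eq _)
      ring
    obtain ⟨x, hx⟩ := key
    refine ⟨insert x F, (Finset.card_insert_le _ _).trans (by omega), Q'.filter (fun p => ¬ R x p), ?_, ?_, ?_⟩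
    · intro p hp
      rcases hc p hp with ⟨y, hy, hr⟩ | hq
      · exact Or.inl ⟨y, Finset.mem_insert_of_mem hy, hr⟩
      · by_cases hr : R x p
        · exact Or.inl ⟨x, Finset.mem_insert_self _ _, hr⟩
        · exact Or.inr (by simp [hq, hr])
    · exact (Finset.filter_subset _ _).trans hs
    · have h6 := Finset.card_filter_add_card_filter_not (s := Q') (fun p => R x p)
      have h7 : ((Q'.filter (fun p => R x p)).card : ℝ) + (Q'.filter (fun p => ¬ R x p)).card = Q'.card := by
        exact_mod_cast h6
      have h8 : (0 : ℝ) ≤ 1 - 1 / (M : ℝ) := by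
        have : 1 / (M : ℝ) ≤ 1 := by
          rw [div_le_one hM']; exact_mod_cast hM
        linarith
      have h9 := mul_le_mul_of_nonneg_right hb h8
      rw [pow_succ, ← mul_assoc]
      refine le_trans ?_ h9
      have : (Q'.card : ℝ) * (1 - 1 / (M : ℝ)) = Q'.card - Q'.card / M := by ring
      rw [this]; linarith

theorem splitter_bern (k β : ℕ) (h : β ≤ k) : (k + 1) ^ β * (k + 1 - β) ≤ k ^ β * (k + 1) := by
  induction β with
  | zero => simp
  | succ β ih =>
    have ih := ih (by omega)
    obtain ⟨d, rfl⟩ := Nat.exists_eq_add_of_le h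
    have e1 : β + 1 + d + 1 - β = d + 2 := by omega
    have e2 : β + 1 + d + 1 - (β + 1) = d + 1 := by omega
    rw [e1] at ih
    rw [e2]
    set k := β + 1 + d with hk
    calc (k + 1) ^ (β + 1) * (d + 1) = (k + 1) ^ β * ((k + 1) * (d + 1)) := by ring
      _ ≤ (k + 1) ^ β * (k * (d + 2)) := by
          apply Nat.mul_le_mul_left
          rw [hk]; nlinarith
      _ = ((k + 1) ^ β * (d + 2)) * k := by ring
      _ ≤ (k ^ β * (k + 1)) * k := Nat.mul_le_mul_right _ ih
      _ = _ := by ring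

theorem splitter_count {U : Type} [Fintype U] [DecidableEq U] (k a b : ℕ) (ha : 1 ≤ a) (hk : a + b = k + 1)
    (A B : Finset U) (hd : Disjoint A B) (hA : A.card ≤ a) (hB : B.card ≤ b) :
    ∃ s : Finset (U → Fin (k + 1)), (∀ f ∈ s, (∀ u ∈ A, f u = 0) ∧ (∀ u ∈ B, f u ≠ 0)) ∧
      Fintype.card (U → Fin (k + 1)) ≤ s.card * (k + 1) ^ (2 * a) := by
  refine ⟨Fintype.piFinset (fun u => if u ∈ A then {0} else if u ∈ B then {0}ᶜ else Finset.univ), ?_, ?_⟩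
  · intro f hf
    rw [Fintype.mem_piFinset] at hf
    constructor
    · intro u hu
      simpa [hu] using hf u
    · intro u hu
      have : u ∉ A := fun h => Finset.disjoint_left.mp hd h hu
      simpa [hu, this] using hf u
  · rw [Fintype.card_piFinset]
    have hp : ∀ u : U, (if u ∈ A then ({0} : Finset (Fin (k+1))) else if u ∈ B then {0}ᶜ else Finset.univ).card
        = if u ∈ A then 1 else if u ∈ B then k else k + 1 := by
      intro u
      split_ifs <;> simp [Finset.card_compl]
    simp only [hp]
    have hq : (∏ u : U, if u ∈ A then 1 else if u ∈ B then k else k + 1) * ((k + 1) ^ A.card * (k + 1) ^ B.card)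
        = (k + 1) ^ Fintype.card U * k ^ B.card := by
      have e1 : (k + 1) ^ A.card = ∏ u : U, if u ∈ A then (k + 1) else 1 := by
        simp [Finset.prod_ite, Finset.filter_mem_eq_inter]
      have e2 : ∀ x : ℕ, x ^ B.card = ∏ u : U, if u ∈ B then x else 1 := by
        intro x
        simp [Finset.prod_ite, Finset.filter_mem_eq_inter]
      have e3 : (k + 1) ^ Fintype.card U = ∏ u : U, (k + 1) := by simp
      rw [e1, e2, e2, e3, ← Finset.prod_mul_distrib, ← Finset.prod_mul_distrib, ← Finset.prod_mul_distrib]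
      apply Finset.prod_congr rfl
      intro u _
      by_cases h1 : u ∈ A
      · have : u ∉ B := Finset.disjoint_left.mp hd h1
        simp [h1, this]
      · by_cases h2 : u ∈ B <;> simp [h1, h2, mul_comm]
    set W := ∏ u : U, if u ∈ A then 1 else if u ∈ B then k else k + 1
    have hbn := splitter_bern k B.card (by omega)
    have hb1 : (k + 1) ^ B.card ≤ k ^ B.card * (k + 1) := by
      refine le_trans ?_ hbn
      apply Nat.le_mul_of_pos_right; omega
    have hcard : Fintype.card (U → Fin (k + 1)) = (k + 1) ^ Fintype.card U := by
      simp
    rw [hcard]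
    have hpos : 0 < (k + 1) ^ B.card := by positivity
    refine Nat.le_of_mul_le_mul_right ?_ hpos
    calc (k + 1) ^ Fintype.card U * (k + 1) ^ B.card
        ≤ (k + 1) ^ Fintype.card U * (k ^ B.card * (k + 1)) := Nat.mul_le_mul_left _ hb1
      _ = W * (k + 1) ^ B.card * (k + 1) ^ (A.card + 1) := by
          rw [← mul_assoc, ← hq]; ring
      _ ≤ W * (k + 1) ^ B.card * (k + 1) ^ (2 * a) := by
          apply Nat.mul_le_mul_left
          exact Nat.pow_le_pow_right (by omega) (by omega)
      _ = _ := by ring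

theorem splitter_core (U : Type) [Fintype U] (a b : ℕ) (hn : 2 ≤ Fintype.card U) (ha : 1 ≤ a) (hb : 1 ≤ b) :
    ∃ F : Finset (Set U),
      F.card ≤ (a + b + 2) ^ (4 * a) * Nat.clog 2 (Fintype.card U) ∧
      ∀ A B : Set U, Disjoint A B → A.ncard ≤ a → B.ncard ≤ b →
        ∃ S ∈ F, A ⊆ S ∧ B ∩ S = ∅ := by
  classical
  obtain ⟨k, hk⟩ : ∃ k, a + b = k + 1 := ⟨a + b - 1, by omega⟩
  let im : ∀ {n : ℕ}, (Fin n → Option U) → Finset U := fun g => Finset.univ.filter (fun u => ∃ i, g i = some u)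
  have him : ∀ (n : ℕ) (g : Fin n → Option U), (im g).card ≤ n := by
    intro n g
    have h1 : (im g).image some ⊆ Finset.univ.image g := by
      intro o ho
      simp only [im, Finset.mem_image, Finset.mem_filter, Finset.mem_univ, true_and] at ho ⊢
      obtain ⟨u, ⟨i, hi⟩, rfl⟩ := ho
      exact ⟨i, hi⟩
    have h2 := Finset.card_le_card h1
    rw [Finset.card_image_of_injective _ (Option.some_injective U)] at h2
    exact h2.trans (Finset.card_image_le.trans (by simp))
  have hex : ∀ (n : ℕ) (A : Set U), A.ncard ≤ n → ∃ g : Fin n → Option U, ∀ u, u ∈ im g ↔ u ∈ A := by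
    intro n A hA
    rw [Set.ncard_eq_toFinset_card'] at hA
    refine ⟨fun i => A.toFinset.toList[(i : ℕ)]?, fun u => ?_⟩
    simp only [im, Finset.mem_filter, Finset.mem_univ, true_and]
    have : u ∈ A ↔ u ∈ A.toFinset.toList := by simp
    rw [this, List.mem_iff_getElem?]
    constructor
    · rintro ⟨i, hi⟩; exact ⟨i, hi⟩
    · rintro ⟨i, hi⟩
      have hl : i < A.toFinset.toList.length := by
        by_contra hcon
        rw [List.getElem?_eq_none (by omega)] at hi
        simp at hi
      rw [Finset.length_toList] at hl
      exact ⟨⟨i, by omega⟩, hi⟩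
  let P := (Fin a → Option U) × (Fin b → Option U)
  let Q : Finset P := Finset.univ.filter (fun p => Disjoint (im p.1) (im p.2))
  let R : (U → Fin (k + 1)) → P → Prop := fun f p => (∀ u ∈ im p.1, f u = 0) ∧ (∀ u ∈ im p.2, f u ≠ 0)
  set L := Nat.clog 2 (Fintype.card U) with hL
  set M := (k + 1) ^ (2 * a) with hM
  have hMpos : 0 < M := by positivity
  have hLpos : 0 < L := Nat.clog_pos (by omega) hn
  obtain ⟨F, hF, Q', hc, -, hbd⟩ := splitter_greedy R Q M hMpos
    (fun p hp => splitter_count k a b ha hk _ _ (by simpa [Q] using hp) (him _ _) (him _ _)) ⟨fun _ => 0⟩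
    (M * (2 * (a + b) * L))
  have hQ : Q.card ≤ (Fintype.card U + 1) ^ (a + b) := by
    refine (Finset.card_filter_le _ _).trans ?_
    simp [P, pow_add]
  have hn2 : Fintype.card U ≤ 2 ^ L := Nat.le_pow_clog (by omega) _
  have hQ2 : Q.card ≤ 2 ^ (2 * (a + b) * L) := by
    refine hQ.trans ?_
    have : Fintype.card U + 1 ≤ 2 ^ (2 * L) := by
      have h2 : 2 ^ (2 * L) = 2 ^ L * 2 ^ L := by rw [two_mul, pow_add]
      rw [h2]; nlinarith
    calc _ ≤ (2 ^ (2 * L)) ^ (a + b) := Nat.pow_le_pow_left this _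
      _ = _ := by rw [← pow_mul]; congr 1; ring
  have hQ' : Q' = ∅ := by
    rw [← Finset.card_eq_zero]
    have hlt : (Q'.card : ℝ) < 1 := by
      refine hbd.trans_lt ?_
      have hM' : (1 : ℝ) ≤ M := by exact_mod_cast hMpos
      have h0 : 0 ≤ 1 - 1 / (M : ℝ) := by
        have : 1 / (M : ℝ) ≤ 1 := by rw [div_le_one (by linarith)]; exact hM'
        linarith
      have h1 : (1 - 1 / (M : ℝ)) ^ M ≤ Real.exp (-1) := by
        have := Real.one_sub_div_pow_le_exp_neg (n := M) (t := 1) hM'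
        exact this
      have h2 : Real.exp (-1) < 1 / 2 := by
        rw [Real.exp_neg, ← one_div]
        apply one_div_lt_one_div_of_lt (by norm_num)
        have := Real.exp_one_gt_d9
        linarith
      have h3 := h1.trans_lt h2
      rw [pow_mul]
      have hne : 2 * (a + b) * L ≠ 0 := by positivity
      have h4 := pow_lt_pow_left₀ h3 (pow_nonneg h0 _) hne
      have h5 : (Q.card : ℝ) ≤ 2 ^ (2 * (a + b) * L) := by exact_mod_cast hQ2
      calc _ ≤ (2 : ℝ) ^ (2 * (a + b) * L) * ((1 - 1 / (M : ℝ)) ^ M) ^ (2 * (a + b) * L) := by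
            apply mul_le_mul_of_nonneg_right h5
            positivity
        _ < (2 : ℝ) ^ (2 * (a + b) * L) * (1 / 2) ^ (2 * (a + b) * L) := by
            apply mul_lt_mul_of_pos_left h4; positivity
        _ = 1 := by rw [← mul_pow]; norm_num
    have : Q'.card < 1 := by exact_mod_cast hlt
    omega
  refine ⟨F.image (fun f => {u | f u = 0}), ?_, ?_⟩
  · refine Finset.card_image_le.trans (hF.trans ?_)
    rw [← mul_assoc]
    apply Nat.mul_le_mul_right
    rw [hM, ← hk]
    calc (a + b) ^ (2 * a) * (2 * (a + b)) ≤ (a + b + 2) ^ (2 * a) * (a + b + 2) ^ 2 := by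
          apply Nat.mul_le_mul
          · exact Nat.pow_le_pow_left (by omega) _
          · nlinarith
      _ = (a + b + 2) ^ (2 * a + 2) := by rw [← pow_add]
      _ ≤ _ := Nat.pow_le_pow_right (by omega) (by omega)
  · intro A B hd hA hB
    obtain ⟨g, hg⟩ := hex a A hA
    obtain ⟨h, hh⟩ := hex b B hB
    have hq : ((g, h) : P) ∈ Q := by
      simp only [Q, Finset.mem_filter, Finset.mem_univ, true_and]
      rw [Finset.disjoint_left]
      intro u hu hu'
      exact Set.disjoint_left.mp hd ((hg u).1 hu) ((hh u).1 hu')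
    rcases hc _ hq with ⟨f, hf, hf1, hf2⟩ | h'
    · refine ⟨_, Finset.mem_image_of_mem _ hf, fun u hu => hf1 u ((hg u).2 hu), ?_⟩
      ext u
      simp only [Set.mem_inter_iff, Set.mem_setOf_eq, Set.mem_empty_iff_false, iff_false, not_and]
      exact fun hu => hf2 u ((hh u).2 hu)
    · simp [hQ'] at h'


/-- the splitter/color-coding lemma of Chitnis et al. (existential form).
There is a constant `c > 0` such that for every finite set `U` with `|U| = n ≥ 2`
and all `a, b ≤ n` there is a family `F` of subsets of `U` of size at most
`(a+b+2)^(c·min(a,b)) · ⌈log₂ n⌉` such that every pair of disjoint sets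
`A, B ⊆ U` with `|A| ≤ a` and `|B| ≤ b` is split by some `S ∈ F`
(`A ⊆ S` and `B ∩ S = ∅`). -/
theorem exists_splitter_family :
    ∃ c : ℕ, 0 < c ∧
      ∀ (U : Type) [Fintype U], ∀ a b : ℕ,
        2 ≤ Fintype.card U → a ≤ Fintype.card U → b ≤ Fintype.card U →
        ∃ F : Finset (Set U),
          F.card ≤ (a + b + 2) ^ (c * min a b) * Nat.clog 2 (Fintype.card U) ∧
          ∀ A B : Set U, Disjoint A B → A.ncard ≤ a → B.ncard ≤ b →
            ∃ S ∈ F, A ⊆ S ∧ B ∩ S = ∅ := by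
  classical
  refine ⟨4, by norm_num, ?_⟩
  intro U _ a b hn _ _
  have hLpos : 0 < Nat.clog 2 (Fintype.card U) := Nat.clog_pos (by omega) hn
  rcases Nat.eq_zero_or_pos a with rfl | ha
  · refine ⟨{∅}, by simp; omega, ?_⟩
    intro A B _ hA _
    have : A = ∅ := (Set.ncard_eq_zero (Set.toFinite A)).1 (by omega)
    exact ⟨∅, by simp, by simp [this], by simp⟩
  rcases Nat.eq_zero_or_pos b with rfl | hb
  · refine ⟨{Set.univ}, by simp; omega, ?_⟩
    intro A B _ _ hB
    have : B = ∅ := (Set.ncard_eq_zero (Set.toFinite B)).1 (by omega)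
    exact ⟨Set.univ, by simp, by simp, by simp [this]⟩
  rcases le_total a b with hab | hab
  · rw [min_eq_left hab]
    exact splitter_core U a b hn ha hb
  · rw [min_eq_right hab]
    obtain ⟨F, hF, h⟩ := splitter_core U b a hn hb ha
    refine ⟨F.image compl, Finset.card_image_le.trans (by rwa [add_comm a b]), ?_⟩
    intro A B hd hA hB
    obtain ⟨S, hS, h1, h2⟩ := h B A hd.symm hB hA
    refine ⟨Sᶜ, Finset.mem_image_of_mem _ hS, ?_, ?_⟩
    · intro u hu hu'
      have : u ∈ A ∩ S := ⟨hu, hu'⟩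
      simp [h2] at this
    · ext u
      simp only [Set.mem_inter_iff, Set.mem_compl_iff, Set.mem_empty_iff_false, iff_false, not_and, not_not]
      exact fun hu => h1 hu
end

section
/- There exists a constant c > 0 such that the following holds. Let U be a finite set with |U| = n ≥ 2, let r ≥ 1 be an integer, and let a₁, a₂, …, a_r be integers with 0 ≤ aᵢ ≤ n for each i; set s = a₁ + a₂ + … + a_r and m = max_{i} aᵢ. Then there exists a family F of functions f : U → {1, …, r} with |F| ≤ (s+2)^{c·(s−m+1)} · (1 + ⌈log₂ n⌉)^{r−1} such that: for any pairwise disjoint sets A₁, A₂, …, A_r ⊆ U with |Aᵢ| ≤ aᵢ for each i ∈ {1,…,r}, there exists a function f ∈ F with Aᵢ ⊆ f⁻¹(i) for every i ∈ {1,…,r}. -/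
open Finset in
theorem cover_aux {X T : Type} [DecidableEq X] [DecidableEq T] (S : Finset X) (good : T → X → Prop)
    (Q : ℕ) (hQ : 0 < Q) (B : Finset T)
    [∀ t, DecidablePred (good t)] (hg : ∀ t ∈ B, S.card ≤ Q * (S.filter (good t)).card)
    (hS : S.Nonempty) (N : ℕ) :
    ∃ F : Finset X, F.card ≤ N ∧
      ((B.filter (fun t => ∀ x ∈ F, ¬ good t x)).card : ℝ) ≤ (1 - 1 / (Q:ℝ)) ^ N * B.card := by
  induction N with
  | zero => exact ⟨∅, by simp, by simp⟩
  | succ N ih =>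
    obtain ⟨F, hF, hB⟩ := ih
    set B' := B.filter (fun t => ∀ x ∈ F, ¬ good t x) with hB'
    have hQ' : (0:ℝ) < Q := by exact_mod_cast hQ
    have hQ1 : (1:ℝ) ≤ Q := by exact_mod_cast hQ
    -- averaging
    have hx : ∃ x ∈ S, B'.card ≤ Q * (B'.filter (fun t => good t x)).card := by
      by_contra hcon
      push Not at hcon
      have h1 : ∑ x ∈ S, Q * (B'.filter (fun t => good t x)).card < ∑ x ∈ S, B'.card :=
        Finset.sum_lt_sum_of_nonempty hS hcon
      have h2 : ∑ x ∈ S, (B'.filter (fun t => good t x)).card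
          = ∑ t ∈ B', (S.filter (good t)).card := by
        simp only [Finset.card_filter]
        exact Finset.sum_comm
      have h3 : ∑ t ∈ B', S.card ≤ ∑ t ∈ B', Q * (S.filter (good t)).card :=
        Finset.sum_le_sum fun t ht => hg t (Finset.mem_of_mem_filter t ht)
      rw [← Finset.mul_sum, h2, Finset.mul_sum] at h1
      simp only [Finset.sum_const, smul_eq_mul] at h1 h3
      rw [mul_comm] at h3
      omega
    obtain ⟨x, hxS, hx⟩ := hx
    refine ⟨insert x F, (Finset.card_insert_le _ _).trans (by omega), ?_⟩
    have h4 : B.filter (fun t => ∀ y ∈ insert x F, ¬ good t y) = B'.filter (fun t => ¬ good t x) := by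
      ext t; simp [hB']; tauto
    rw [h4]
    have h5 := Finset.card_filter_add_card_filter_not (s := B') (fun t => good t x)
    have h5' : ((B'.filter (fun t => good t x)).card : ℝ) + (B'.filter (fun t => ¬ good t x)).card
      = B'.card := by exact_mod_cast h5
    have hx' : (B'.card : ℝ) ≤ Q * (B'.filter (fun t => good t x)).card := by exact_mod_cast hx
    have h6 : (B'.card : ℝ) / Q ≤ (B'.filter (fun t => good t x)).card := by
      rw [div_le_iff₀ hQ']; linarith
    have h7 : (0:ℝ) ≤ 1 - 1 / (Q:ℝ) := by
      rw [sub_nonneg, div_le_one hQ']; exact hQ1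
    calc ((B'.filter (fun t => ¬ good t x)).card : ℝ) ≤ (1 - 1 / (Q:ℝ)) * B'.card := by
          have : (1 - 1 / (Q:ℝ)) * B'.card = B'.card - B'.card / Q := by ring
          linarith
      _ ≤ (1 - 1 / (Q:ℝ)) * ((1 - 1 / (Q:ℝ)) ^ N * B.card) := by gcongr
      _ = _ := by ring

open Finset in
theorem cover_main {X T : Type} [DecidableEq X] [DecidableEq T] (S : Finset X) (good : T → X → Prop)
    (Q : ℕ) (hQ : 0 < Q) (B : Finset T)
    [∀ t, DecidablePred (good t)] (hg : ∀ t ∈ B, S.card ≤ Q * (S.filter (good t)).card)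
    (hS : S.Nonempty) (k : ℕ) (hk : B.card < 2 ^ k) :
    ∃ F : Finset X, F.card ≤ Q * k ∧ ∀ t ∈ B, ∃ x ∈ F, good t x := by
  obtain ⟨F, hF, hB⟩ := cover_aux S good Q hQ B hg hS (Q * k)
  refine ⟨F, hF, ?_⟩
  have hQ' : (0:ℝ) < Q := by exact_mod_cast hQ
  have hQ1 : (1:ℝ) ≤ Q := by exact_mod_cast hQ
  have h7 : (0:ℝ) ≤ 1 - 1 / (Q:ℝ) := by
    rw [sub_nonneg, div_le_one hQ']; exact hQ1
  have h1 : (1 - 1 / (Q:ℝ)) ^ Q ≤ 1 / 2 := by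
    have h2 : 1 - 1 / (Q:ℝ) ≤ Real.exp (-(1 / (Q:ℝ))) := by
      have := Real.add_one_le_exp (-(1 / (Q:ℝ))); linarith
    calc (1 - 1 / (Q:ℝ)) ^ Q ≤ (Real.exp (-(1 / (Q:ℝ)))) ^ Q := by gcongr
      _ = Real.exp (-1) := by
        rw [← Real.exp_nat_mul]; congr 1; field_simp
      _ ≤ 1 / 2 := by
        rw [Real.exp_neg, ← one_div]
        apply one_div_le_one_div_of_le (by norm_num)
        have := Real.add_one_le_exp (1:ℝ); linarith
  have h3 : (1 - 1 / (Q:ℝ)) ^ (Q * k) * B.card < 1 := by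
    have hk' : (B.card : ℝ) < 2 ^ k := by exact_mod_cast hk
    calc (1 - 1 / (Q:ℝ)) ^ (Q * k) * B.card = ((1 - 1 / (Q:ℝ)) ^ Q) ^ k * B.card := by rw [pow_mul]
      _ ≤ (1 / 2) ^ k * B.card := by gcongr
      _ < (1 / 2) ^ k * 2 ^ k := by gcongr
      _ = 1 := by rw [← mul_pow]; norm_num
  have h4 : (B.filter (fun t => ∀ x ∈ F, ¬ good t x)).card < 1 := by
    exact_mod_cast hB.trans_lt h3
  intro t ht
  by_contra hcon
  push Not at hcon
  have : t ∈ B.filter (fun t => ∀ x ∈ F, ¬ good t x) := by simp [ht]; exact hcon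
  have := Finset.card_pos.mpr ⟨t, this⟩
  omega

theorem ratio_bound {r : ℕ} (a : Fin r → ℕ) (hs : 0 < ∑ i, a i) (hr : 1 ≤ r) :
    ∏ i, (((∑ i, a i : ℕ) : ℝ) / a i) ^ a i ≤
      (((∑ i, a i + 2) ^ (2 * (∑ i, a i - Finset.univ.sup a)) : ℕ) : ℝ) := by
  haveI : Nonempty (Fin r) := ⟨⟨0, hr⟩⟩
  obtain ⟨i0, -, hi0⟩ := Finset.exists_mem_eq_sup Finset.univ Finset.univ_nonempty a
  rw [hi0]
  set s := ∑ i, a i with hsdef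
  have hsplit : a i0 + ∑ i ∈ Finset.univ.erase i0, a i = s :=
    Finset.add_sum_erase _ _ (Finset.mem_univ i0)
  have hm : 0 < a i0 := by
    by_contra h
    have h0 : ∀ i, a i = 0 := fun i => by
      have := Finset.le_sup (f := a) (Finset.mem_univ i); omega
    simp [h0] at hsdef; omega
  set d := s - a i0 with hd
  have hdd : ∑ i ∈ Finset.univ.erase i0, a i = d := by omega
  rw [← Finset.mul_prod_erase _ _ (Finset.mem_univ i0)]
  have hm' : (0:ℝ) < a i0 := by exact_mod_cast hm
  have e1 : ((s:ℝ) / a i0) ^ a i0 ≤ ((s:ℝ) + 2) ^ d := by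
    have hsd : (s:ℝ) = a i0 + d := by
      have : s = a i0 + d := by omega
      exact_mod_cast this
    have h1 : (s:ℝ) / a i0 ≤ Real.exp (d / a i0) := by
      have := Real.add_one_le_exp ((d:ℝ) / a i0)
      have h2 : (s:ℝ) / a i0 = d / a i0 + 1 := by rw [hsd]; field_simp; ring
      linarith
    calc ((s:ℝ) / a i0) ^ a i0 ≤ (Real.exp (d / a i0)) ^ a i0 := by gcongr
      _ = Real.exp 1 ^ d := by
        rw [← Real.exp_nat_mul, ← Real.exp_nat_mul]; congr 1; field_simp
      _ ≤ ((s:ℝ) + 2) ^ d := by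
        have := Real.exp_one_lt_d9
        have : (1:ℝ) ≤ s := by exact_mod_cast hs
        gcongr; linarith
  have e2 : ∏ i ∈ Finset.univ.erase i0, ((s:ℝ) / a i) ^ a i ≤ ((s:ℝ) + 2) ^ d := by
    rw [← hdd, ← Finset.prod_pow_eq_pow_sum]
    apply Finset.prod_le_prod
    · intro i _; positivity
    · intro i _
      rcases Nat.eq_zero_or_pos (a i) with h | h
      · simp [h]
      · have : (1:ℝ) ≤ a i := by exact_mod_cast h
        have h3 : (s:ℝ) / a i ≤ s := div_le_self (by positivity) this
        gcongr; linarith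
  push_cast
  rw [two_mul, pow_add]
  gcongr

theorem exists_enum {U : Type} (n : ℕ) (P : Finset U) (h : P.card ≤ n) :
    ∃ e : Fin n → Option U, ∀ x, x ∈ P ↔ ∃ j, e j = some x := by
  refine ⟨fun j => P.toList[j.1]?, fun x => ?_⟩
  rw [← Finset.mem_toList, List.mem_iff_getElem?]
  constructor
  · rintro ⟨j, hj⟩
    have : j < P.toList.length := (List.getElem?_eq_some_iff.mp hj).1
    rw [Finset.length_toList] at this
    exact ⟨⟨j, by omega⟩, hj⟩
  · rintro ⟨j, hj⟩; exact ⟨j, hj⟩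

open Classical in
theorem label_count {U : Type} [Fintype U] {r : ℕ} (a : Fin r → ℕ) :
    (Finset.univ.filter (fun l : U → Option (Fin r) =>
      ∀ i, (Finset.univ.filter (fun x => l x = some i)).card ≤ a i)).card
      ≤ (Fintype.card U + 1) ^ (∑ i, a i) := by
  have hex : ∀ l : U → Option (Fin r), ∃ h : (Σ i, Fin (a i)) → Option U,
      (∀ i, (Finset.univ.filter (fun x => l x = some i)).card ≤ a i) →
      ∀ x i, l x = some i ↔ ∃ j, h ⟨i, j⟩ = some x := by
    intro l
    by_cases hl : ∀ i, (Finset.univ.filter (fun x => l x = some i)).card ≤ a i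
    · choose e he using fun i => exists_enum (a i) _ (hl i)
      refine ⟨fun p => e p.1 p.2, fun _ x i => ?_⟩
      have := he i x
      simpa using this
    · exact ⟨fun _ => none, fun h => absurd h hl⟩
  choose h hh using hex
  have hc : (Fintype.card U + 1) ^ (∑ i, a i) =
      (Finset.univ : Finset ((Σ i, Fin (a i)) → Option U)).card := by
    simp
  rw [hc]
  apply Finset.card_le_card_of_injOn h (fun _ _ => Finset.mem_coe.mpr (Finset.mem_univ _))
  intro l hl l' hl' heq
  simp only [Finset.coe_filter, Finset.mem_univ, true_and, Set.mem_setOf_eq] at hl hl'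
  funext x
  apply Option.ext
  intro i
  rw [hh l hl x i, hh l' hl' x i, heq]

open Classical in
theorem good_count {U : Type} [Fintype U] {r : ℕ} (hr : 1 ≤ r) (a : Fin r → ℕ)
    (hs : 0 < ∑ i, a i) (l : U → Option (Fin r))
    (hl : ∀ i, (Finset.univ.filter (fun x => l x = some i)).card ≤ a i) :
    (Finset.univ : Finset (U → Σ i, Fin (a i))).card ≤
      (∑ i, a i + 2) ^ (2 * (∑ i, a i - Finset.univ.sup a)) *
      (Finset.univ.filter (fun g : U → Σ i, Fin (a i) => ∀ x i, l x = some i → (g x).1 = i)).card := by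
  have hpi : (Finset.univ.filter (fun g : U → Σ i, Fin (a i) => ∀ x i, l x = some i → (g x).1 = i))
      = Fintype.piFinset (fun x => Finset.univ.filter
          (fun p : Σ i, Fin (a i) => ∀ i, l x = some i → p.1 = i)) := by
    ext g; simp
  rw [hpi, Fintype.card_piFinset]
  set s := ∑ i, a i with hsdef
  let ρ : Option (Fin r) → ℝ := fun o => o.elim 1 (fun i => (s:ℝ) / a i)
  have hw : ∀ x, (s:ℝ) = ρ (l x) * ((Finset.univ.filter
          (fun p : Σ i, Fin (a i) => ∀ i, l x = some i → p.1 = i)).card : ℝ) := by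
    intro x
    cases hx : l x with
    | none => simp [ρ, hsdef]
    | some i =>
      have hc : (Finset.univ.filter
          (fun p : Σ i, Fin (a i) => ∀ i', some i = some i' → p.1 = i')).card = a i := by
        have : (Finset.univ.filter
          (fun p : Σ i, Fin (a i) => ∀ i', some i = some i' → p.1 = i'))
          = (Finset.univ : Finset (Fin (a i))).map (Function.Embedding.sigmaMk i) := by
          ext ⟨i', j⟩
          simp only [Finset.mem_filter, Finset.mem_univ, true_and, Option.some.injEq,
            Finset.mem_map, Function.Embedding.sigmaMk_apply, forall_eq']
          constructor
          · rintro rfl; exact ⟨j, rfl⟩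
          · rintro ⟨j', h⟩; exact (congrArg Sigma.fst h).symm
        rw [this]; simp
      rw [hc]
      have hpos : 0 < a i := lt_of_lt_of_le (Finset.card_pos.mpr ⟨x, by simp [hx]⟩) (hl i)
      have : (a i : ℝ) ≠ 0 := by positivity
      simp only [ρ, Option.elim]
      field_simp
  have hρ : ∏ x, ρ (l x) ≤ (((s + 2) ^ (2 * (s - Finset.univ.sup a)) : ℕ) : ℝ) := by
    refine le_trans ?_ (ratio_bound a hs hr)
    rw [← Finset.prod_fiberwise Finset.univ l (fun x => ρ (l x))]
    rw [Fintype.prod_option]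
    have h0 : ∏ x ∈ Finset.univ.filter (fun x => l x = none), ρ (l x) = 1 := by
      apply Finset.prod_eq_one
      intro x hx
      rw [(Finset.mem_filter.mp hx).2]; rfl
    rw [h0, one_mul]
    apply Finset.prod_le_prod
    · intro i _
      apply Finset.prod_nonneg
      intro x hx
      rw [(Finset.mem_filter.mp hx).2]
      simp only [ρ, Option.elim]; positivity
    · intro i _
      have h1 : ∏ x ∈ Finset.univ.filter (fun x => l x = some i), ρ (l x)
          = ((s:ℝ) / a i) ^ (Finset.univ.filter (fun x => l x = some i)).card := by
        apply Finset.prod_eq_pow_card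
        intro x hx
        rw [(Finset.mem_filter.mp hx).2]; rfl
      rw [h1]
      have hi := hl i
      rcases Nat.eq_zero_or_pos (a i) with h | h
      · have : (Finset.univ.filter (fun x => l x = some i)).card = 0 := by omega
        rw [this, h]
      · apply pow_le_pow_right₀ _ hi
        rw [one_le_div (by exact_mod_cast h)]
        exact_mod_cast Finset.single_le_sum (f := a) (fun _ _ => Nat.zero_le _) (Finset.mem_univ i)
  have hcard : ((Finset.univ : Finset (U → Σ i, Fin (a i))).card : ℝ) = ∏ x : U, (s:ℝ) := by
    simp [hsdef]
  have key : ((Finset.univ : Finset (U → Σ i, Fin (a i))).card : ℝ) ≤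
      (((s + 2) ^ (2 * (s - Finset.univ.sup a)) : ℕ) : ℝ) *
      ∏ x, ((Finset.univ.filter
          (fun p : Σ i, Fin (a i) => ∀ i, l x = some i → p.1 = i)).card : ℝ) := by
    rw [hcard, Finset.prod_congr rfl (fun x _ => hw x), Finset.prod_mul_distrib]
    exact mul_le_mul_of_nonneg_right hρ (Finset.prod_nonneg fun _ _ => Nat.cast_nonneg _)
  exact_mod_cast key


/-- the multi-part generalization of the splitter/color-coding lemma
(existential form). There is a constant `c > 0` such that for every finite set `U`
with `|U| = n ≥ 2`, every `r ≥ 1`, and part-size bounds `a₁,…,a_r ≤ n` with sum `s`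
and maximum `m`, there is a family `F` of functions `U → {1,…,r}` (modelled as
`U → Fin r`) of size at most `(s+2)^(c·(s−m+1)) · (1+⌈log₂ n⌉)^(r−1)` such that for
all pairwise disjoint sets `A₁,…,A_r ⊆ U` with `|Aᵢ| ≤ aᵢ` there is an `f ∈ F`
with `Aᵢ ⊆ f⁻¹(i)` for every `i`. -/
theorem exists_multiway_splitter_family :
    ∃ c : ℕ, 0 < c ∧
      ∀ (U : Type) [Fintype U], ∀ (r : ℕ), 1 ≤ r →
        ∀ a : Fin r → ℕ,
        2 ≤ Fintype.card U → (∀ i : Fin r, a i ≤ Fintype.card U) →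
        ∃ F : Finset (U → Fin r),
          F.card ≤ (∑ i, a i + 2) ^ (c * (∑ i, a i - Finset.univ.sup a + 1)) *
              (1 + Nat.clog 2 (Fintype.card U)) ^ (r - 1) ∧
          ∀ A : Fin r → Set U, (Pairwise fun i j => Disjoint (A i) (A j)) →
            (∀ i : Fin r, (A i).ncard ≤ a i) →
            ∃ f ∈ F, ∀ i : Fin r, A i ⊆ f ⁻¹' {i} := by
  classical
  refine ⟨2, by norm_num, ?_⟩
  intro U _ r hr a hn ha
  set s := ∑ i, a i with hsdef
  set L := Nat.clog 2 (Fintype.card U) with hL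
  have hone : ∀ e, 1 ≤ (s + 2) ^ e * (1 + L) ^ (r - 1) := fun e =>
    Nat.one_le_iff_ne_zero.mpr (by positivity)
  rcases Nat.eq_zero_or_pos s with h0 | hs
  · refine ⟨{fun _ => ⟨0, hr⟩}, by simpa using hone _, ?_⟩
    intro A _ hA
    refine ⟨_, Finset.mem_singleton_self _, fun i => ?_⟩
    have h1 : a i = 0 := (Finset.sum_eq_zero_iff.mp h0) i (Finset.mem_univ i)
    have h2 : A i = ∅ := by
      have := hA i
      rw [h1, Nat.le_zero, Set.ncard_eq_zero (Set.toFinite _)] at this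
      exact this
    simp [h2]
  rcases Nat.lt_or_ge r 2 with hr2 | hr2
  · obtain rfl : r = 1 := by omega
    refine ⟨{fun _ => 0}, by simpa using hone _, ?_⟩
    intro A _ hA
    refine ⟨_, Finset.mem_singleton_self _, fun i x _ => ?_⟩
    simpa using (Subsingleton.elim 0 i)
  set Q := (s + 2) ^ (2 * (s - Finset.univ.sup a)) with hQ
  have hne : Nonempty (Σ i, Fin (a i)) := by
    rw [← Fintype.card_pos_iff]; simpa using hs
  have hk : (Finset.univ.filter (fun l : U → Option (Fin r) =>
      ∀ i, (Finset.univ.filter (fun x => l x = some i)).card ≤ a i)).card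
      < 2 ^ ((s + 1) * (1 + L)) := by
    refine (label_count a).trans_lt ?_
    have h1 : Fintype.card U ≤ 2 ^ L := Nat.le_pow_clog (by norm_num) _
    have h2 : Fintype.card U + 1 ≤ 2 ^ (1 + L) := by
      have : 1 ≤ 2 ^ L := Nat.one_le_two_pow
      rw [pow_add]; omega
    calc (Fintype.card U + 1) ^ s ≤ (2 ^ (1 + L)) ^ s := Nat.pow_le_pow_left h2 _
      _ = 2 ^ (s * (1 + L)) := by rw [← pow_mul, mul_comm]
      _ < 2 ^ ((s + 1) * (1 + L)) := by
        apply Nat.pow_lt_pow_right (by norm_num)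
        rw [add_mul]; omega
  obtain ⟨F, hF, hcov⟩ := cover_main (Finset.univ : Finset (U → Σ i, Fin (a i)))
    (fun (l : U → Option (Fin r)) g => ∀ x i, l x = some i → (g x).1 = i) Q (by positivity)
    (Finset.univ.filter (fun l : U → Option (Fin r) =>
      ∀ i, (Finset.univ.filter (fun x => l x = some i)).card ≤ a i))
    (fun l hl => good_count hr a hs l (Finset.mem_filter.mp hl).2)
    Finset.univ_nonempty _ hk
  refine ⟨F.image (fun g x => (g x).1), ?_, ?_⟩
  · calc (F.image (fun g x => (g x).1)).card ≤ F.card := Finset.card_image_le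
      _ ≤ Q * ((s + 1) * (1 + L)) := hF
      _ ≤ Q * ((s + 2) ^ 2 * (1 + L) ^ (r - 1)) := by
        apply Nat.mul_le_mul_left
        apply Nat.mul_le_mul
        · nlinarith
        · exact Nat.le_self_pow (by omega) _
      _ = _ := by rw [hQ, ← mul_assoc, ← pow_add, mul_add, mul_one]
  · intro A hdisj hA
    let l : U → Option (Fin r) := fun x => if h : ∃ i, x ∈ A i then some h.choose else none
    have hl : ∀ x i, l x = some i ↔ x ∈ A i := by
      intro x i
      have huniq : ∀ j, x ∈ A i → x ∈ A j → j = i := by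
        intro j hi hj
        by_contra hne
        exact Set.disjoint_left.mp (hdisj hne) hj hi
      by_cases h : ∃ i, x ∈ A i
      · simp only [l, dif_pos h, Option.some.injEq]
        constructor
        · intro e; rw [← e]; exact h.choose_spec
        · intro hi; exact huniq _ hi h.choose_spec
      · simp only [l, dif_neg h]
        constructor
        · intro e; cases e
        · intro hi; exact absurd ⟨i, hi⟩ h
    obtain ⟨g, hg, hgood⟩ := hcov l (by
      simp only [Finset.mem_filter, Finset.mem_univ, true_and]
      intro i
      refine le_trans (le_of_eq ?_) (hA i)
      rw [← Set.ncard_coe_finset]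
      congr 1
      ext x; simp [hl])
    refine ⟨_, Finset.mem_image_of_mem _ hg, fun i x hx => ?_⟩
    exact hgood x i ((hl x i).mpr hx)
end
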